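/- arXiv:2210.13178 — 4 statements merged into one kernel-verified Lean document; each statement's English description precedes it below -/
import Mathlib

section
/- Fix θ₀ > 1 and h ∈ ℝ, set θ_n := θ₀ + h/√n, and let μ_n be the probability measure on ℝ with density proportional to exp( −(1/2)nθ_nφ² + n·log cosh(θ_nφ) ). Then the conditional law of φ given φ > 0 (i.e., μ_n restricted to (0,∞) and normalized), pushed forward under the map φ ↦ √n·(φ − m(θ_n)), converges weakly to the Gaussian distribution N(0, 1/(θ₀ − (1 − m(θ₀)²)·θ₀²)), and moreover all moments converge to the corresponding moments of this Gaussian. -/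
open MeasureTheory ProbabilityTheory Filter

noncomputable def phiDensity (n : ℕ) (θ φ : ℝ) : ℝ :=
  Real.exp (-((n : ℝ) * θ * φ ^ 2) / 2 + (n : ℝ) * Real.log (Real.cosh (θ * φ)))

noncomputable def phiUnnorm (n : ℕ) (θ : ℝ) : Measure ℝ :=
  MeasureTheory.volume.withDensity fun φ => ENNReal.ofReal (phiDensity n θ φ)

/-- The probability measure on `ℝ` with density proportional to `phiDensity`. -/
noncomputable def phiMeasure (n : ℕ) (θ : ℝ) : Measure ℝ :=
  (phiUnnorm n θ Set.univ)⁻¹ • phiUnnorm n θ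

/-- The conditional law of `μ` given `(0,∞)`. -/
noncomputable def condPos (μ : Measure ℝ) : Measure ℝ :=
  (μ (Set.Ioi 0))⁻¹ • μ.restrict (Set.Ioi 0)

/-!
Laplace's method. The density of `φ` is `exp (n * phiExponent θ φ)`, and on `(0, ∞)` the exponent
is maximal exactly at the spontaneous magnetization `m`. Taylor's formula at `m` shows that the
density of `√n (φ - m)`, normalized by its value at `0`, converges pointwise to a Gaussian.
Concavity of `tanh` on `[0, ∞)` gives a quadratic upper bound for the exponent on all of `(0, ∞)`,
locally uniform in `θ`, so these densities have a common Gaussian majorant. Dominated convergence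
then applies to the numerator and the denominator of every expectation.
-/

namespace CurieWeiss

open Real Set Topology

lemma hasDerivAt_tanh (x : ℝ) : HasDerivAt tanh (1 - tanh x ^ 2) x := by
  have hcosh : cosh x ≠ 0 := (cosh_pos x).ne'
  rw [funext tanh_eq_sinh_div_cosh]
  refine ((hasDerivAt_sinh x).div (hasDerivAt_cosh x) hcosh).congr_deriv ?_
  simp only
  field_simp

lemma continuous_tanh : Continuous tanh :=
  continuous_iff_continuousAt.2 fun x => (hasDerivAt_tanh x).continuousAt

lemma strictMono_tanh : StrictMono tanh :=
  strictMono_of_hasDerivAt_pos hasDerivAt_tanh fun x => sub_pos.2 (tanh_sq_lt_one x)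

lemma strictConcaveOn_tanh : StrictConcaveOn ℝ (Ici 0) tanh := by
  refine StrictAntiOn.strictConcaveOn_of_deriv (convex_Ici 0) continuous_tanh.continuousOn ?_
  rw [interior_Ici]
  intro x hx y _ hxy
  rw [(hasDerivAt_tanh x).deriv, (hasDerivAt_tanh y).deriv]
  have hx₀ : 0 < tanh x := by simpa only [tanh_zero] using strictMono_tanh hx
  have hlt : tanh x < tanh y := strictMono_tanh hxy
  gcongr

lemma strictAntiOn_tanh_mul_div {θ : ℝ} (hθ : 0 < θ) :
    StrictAntiOn (fun x => tanh (θ * x) / x) (Ioi 0) := by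
  intro x hx y hy hxy
  have hx' : 0 < θ * x := mul_pos hθ hx
  have hy' : 0 < θ * y := mul_pos hθ hy
  have hsecant := strictConcaveOn_tanh.secant_strict_mono self_mem_Ici (mem_Ici.2 hx'.le)
    (mem_Ici.2 hy'.le) hx'.ne' hy'.ne' (mul_lt_mul_of_pos_left hxy hθ)
  simp only [tanh_zero, sub_zero, mul_comm θ, ← div_div] at hsecant
  simpa only [mul_comm θ] using (div_lt_div_iff_of_pos_right hθ).1 hsecant

lemma hasDerivAt_log_cosh (x : ℝ) : HasDerivAt (fun x => log (cosh x)) (tanh x) x := by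
  rw [tanh_eq_sinh_div_cosh]
  exact (hasDerivAt_cosh x).log (cosh_pos x).ne'

lemma log_cosh_le_abs (u : ℝ) : log (cosh u) ≤ |u| := by
  rw [log_le_iff_le_exp (cosh_pos u), ← cosh_abs, ← cosh_add_sinh]
  exact le_add_of_nonneg_right (sinh_nonneg_iff.2 (abs_nonneg u))

lemma le_of_sub_mul_deriv_nonpos {f f' : ℝ → ℝ} {s : Set ℝ} {a x : ℝ} (hs : s.OrdConnected)
    (hf : ∀ y ∈ s, HasDerivAt f (f' y) y) (hf' : ∀ y ∈ s, (y - a) * f' y ≤ 0)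
    (ha : a ∈ s) (hx : x ∈ s) : f x ≤ f a := by
  rcases lt_trichotomy x a with hxa | rfl | hax
  · have hsub : Icc x a ⊆ s := hs.out hx ha
    obtain ⟨c, hc, hslope⟩ := exists_hasDerivAt_eq_slope f f' hxa
      (fun y hy => (hf y (hsub hy)).continuousAt.continuousWithinAt)
      fun y hy => hf y (hsub (Ioo_subset_Icc_self hy))
    have hderiv : 0 ≤ f' c :=
      nonneg_of_mul_nonpos_right (hf' c (hsub (Ioo_subset_Icc_self hc))) (sub_neg.2 hc.2)
    rwa [hslope, le_div_iff₀ (sub_pos.2 hxa), zero_mul, sub_nonneg] at hderiv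
  · exact le_rfl
  · have hsub : Icc a x ⊆ s := hs.out ha hx
    obtain ⟨c, hc, hslope⟩ := exists_hasDerivAt_eq_slope f f' hax
      (fun y hy => (hf y (hsub hy)).continuousAt.continuousWithinAt)
      fun y hy => hf y (hsub (Ioo_subset_Icc_self hy))
    have hderiv : f' c ≤ 0 :=
      nonpos_of_mul_nonpos_right (hf' c (hsub (Ioo_subset_Icc_self hc))) (sub_pos.2 hc.1)
    rwa [hslope, div_le_iff₀ (sub_pos.2 hax), zero_mul, sub_nonpos] at hderiv

lemma exists_taylor_two {f f' f'' : ℝ → ℝ} (hf : ∀ x, HasDerivAt f (f' x) x)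
    (hf' : ∀ x, HasDerivAt f' (f'' x) x) (hcont : Continuous f'') (a t : ℝ) :
    ∃ ξ ∈ uIcc a (a + t), f (a + t) = f a + t * f' a + t ^ 2 / 2 * f'' ξ := by
  rcases eq_or_ne t 0 with rfl | ht
  · exact ⟨a, left_mem_uIcc, by simp⟩
  have hne : a ≠ a + t := by simpa using ht
  have hderiv : deriv f = f' := funext fun x => (hf x).deriv
  have hderiv' : deriv f' = f'' := funext fun x => (hf' x).deriv
  have hcontDiff' : ContDiff ℝ 1 f' :=
    contDiff_one_iff_deriv.2 ⟨fun x => (hf' x).differentiableAt, by rwa [hderiv']⟩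
  have hcontDiff : ContDiff ℝ (1 + 1) f :=
    contDiff_succ_iff_deriv.2 ⟨fun x => (hf x).differentiableAt, by simp, by rwa [hderiv]⟩
  obtain ⟨ξ, hξ, h⟩ := taylor_mean_remainder_lagrange_iteratedDeriv (n := 1) hne
    (by exact_mod_cast hcontDiff.contDiffOn)
  refine ⟨ξ, Ioo_subset_Icc_self hξ, ?_⟩
  have hwithin : derivWithin f (uIcc a (a + t)) a = f' a :=
    (hf a).hasDerivWithinAt.derivWithin (uniqueDiffOn_uIcc hne a left_mem_uIcc)
  have hsecond : iteratedDeriv (1 + 1) f ξ = f'' ξ := by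
    rw [iteratedDeriv_succ, iteratedDeriv_one, hderiv, hderiv']
  rw [taylorWithinEval_succ, taylor_within_zero_eval, iteratedDerivWithin_one, hwithin,
    hsecond] at h
  norm_num at h
  linarith

lemma tendsto_div_sqrt_natCast (x : ℝ) : Tendsto (fun n : ℕ => x / √n) atTop (𝓝 0) :=
  tendsto_const_nhds.div_atTop (tendsto_sqrt_atTop.comp tendsto_natCast_atTop_atTop)

/-- `m` is the spontaneous magnetization of the Curie–Weiss model at inverse temperature `θ`: the
positive solution of the mean-field equation `tanh (θ m) = m`. -/
structure IsSpontaneousMagnetization (θ m : ℝ) : Prop where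
  pos : 0 < m
  tanh_mul_eq : tanh (θ * m) = m

/-- The exponent per spin of `phiDensity`, i.e. minus the mean-field free energy. -/
noncomputable def phiExponent (θ φ : ℝ) : ℝ :=
  -(θ * φ ^ 2) / 2 + log (cosh (θ * φ))

/-- Minus the slope, between `m / 2` and `m`, of the function `x ↦ tanh (θ x) - x`, which vanishes
at the spontaneous magnetization `m`. It controls how fast `phiExponent θ` decays away from `m`. -/
noncomputable def restoringRate (θ m : ℝ) : ℝ :=
  (tanh (θ * (m / 2)) - m / 2) / (m / 2)

lemma hasDerivAt_phiExponent (θ φ : ℝ) :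
    HasDerivAt (phiExponent θ) (θ * (tanh (θ * φ) - φ)) φ := by
  have hquad : HasDerivAt (fun φ : ℝ => -(θ * φ ^ 2) / 2) (-(θ * (2 * φ)) / 2) φ := by
    simpa using (((hasDerivAt_pow 2 φ).const_mul θ).neg).div_const 2
  have hlog : HasDerivAt (fun φ => log (cosh (θ * φ))) (tanh (θ * φ) * θ) φ :=
    (hasDerivAt_log_cosh (θ * φ)).comp φ (hasDerivAt_const_mul θ)
  exact (hquad.add hlog).congr_deriv (by ring)

lemma continuous_phiExponent (θ : ℝ) : Continuous (phiExponent θ) :=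
  continuous_iff_continuousAt.2 fun φ => (hasDerivAt_phiExponent θ φ).continuousAt

namespace IsSpontaneousMagnetization

variable {θ m x : ℝ}

lemma inverseTemperature_pos (h : IsSpontaneousMagnetization θ m) : 0 < θ := by
  have htanh : tanh 0 < tanh (θ * m) := by
    rw [tanh_zero, h.tanh_mul_eq]
    exact h.pos
  exact pos_of_mul_pos_left (strictMono_tanh.lt_iff_lt.1 htanh) h.pos.le

lemma lt_tanh_mul_iff (h : IsSpontaneousMagnetization θ m) (hx : 0 < x) :
    x < tanh (θ * x) ↔ x < m := by
  have hsecant := (strictAntiOn_tanh_mul_div h.inverseTemperature_pos).lt_iff_gt h.pos hx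
  rwa [h.tanh_mul_eq, div_self h.pos.ne', one_lt_div hx] at hsecant

lemma tanh_mul_lt_iff (h : IsSpontaneousMagnetization θ m) (hx : 0 < x) :
    tanh (θ * x) < x ↔ m < x := by
  have hsecant := (strictAntiOn_tanh_mul_div h.inverseTemperature_pos).lt_iff_gt hx h.pos
  rwa [h.tanh_mul_eq, div_self h.pos.ne', div_lt_one hx] at hsecant

lemma tendsto {ι : Type*} {l : Filter ι} {θ m : ι → ℝ} {θ₀ m₀ : ℝ}
    (h₀ : IsSpontaneousMagnetization θ₀ m₀) (hθ : Tendsto θ l (𝓝 θ₀))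
    (h : ∀ᶠ i in l, IsSpontaneousMagnetization (θ i) (m i)) : Tendsto m l (𝓝 m₀) := by
  have htanh (x : ℝ) : Tendsto (fun i => tanh (θ i * x)) l (𝓝 (tanh (θ₀ * x))) :=
    (continuous_tanh.tendsto _).comp (hθ.mul_const x)
  refine tendsto_order.2 ⟨fun a ha => ?_, fun a ha => ?_⟩
  · rcases le_or_gt a 0 with ha₀ | ha₀
    · exact h.mono fun i hi => ha₀.trans_lt hi.pos
    · filter_upwards [h, (htanh a).eventually_const_lt ((h₀.lt_tanh_mul_iff ha₀).2 ha)]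
        with i hi hlt using (hi.lt_tanh_mul_iff ha₀).1 hlt
  · have ha₀ : 0 < a := h₀.pos.trans ha
    filter_upwards [h, (htanh a).eventually_lt_const ((h₀.tanh_mul_lt_iff ha₀).2 ha)]
      with i hi hlt using (hi.tanh_mul_lt_iff ha₀).1 hlt

lemma precision_pos (h : IsSpontaneousMagnetization θ m) : 0 < θ - (1 - m ^ 2) * θ ^ 2 := by
  have hθ := h.inverseTemperature_pos
  have hθm : 0 < θ * m := mul_pos hθ h.pos
  have hslope : 1 - m ^ 2 < m / (θ * m) := by
    have hderiv := hasDerivAt_tanh (θ * m)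
    have := strictConcaveOn_tanh.lt_slope_of_hasDerivAt self_mem_Ici
      (mem_Ici.2 hθm.le) hθm hderiv
    rwa [h.tanh_mul_eq, slope_def_field, h.tanh_mul_eq, tanh_zero, sub_zero, sub_zero] at this
  have hlt : (1 - m ^ 2) * θ < 1 := by
    rwa [div_mul_cancel_right₀ h.pos.ne', ← one_div, lt_div_iff₀ hθ] at hslope
  nlinarith

lemma restoringRate_pos (h : IsSpontaneousMagnetization θ m) : 0 < restoringRate θ m := by
  have hm := half_pos h.pos
  exact div_pos (sub_pos.2 ((h.lt_tanh_mul_iff hm).2 (half_lt_self h.pos))) hm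

lemma sub_mul_tanh_sub_le (h : IsSpontaneousMagnetization θ m) (hx : m / 2 ≤ x) :
    (x - m) * (tanh (θ * x) - x) ≤ -restoringRate θ m * (x - m) ^ 2 := by
  rcases eq_or_ne x m with rfl | hxm
  · simp
  have hθ := h.inverseTemperature_pos
  have hm := h.pos
  have hsecant := strictConcaveOn_tanh.concaveOn.neg.secant_mono (a := θ * m)
    (x := θ * (m / 2)) (y := θ * x) (mem_Ici.2 (by positivity)) (mem_Ici.2 (by positivity))
    (mem_Ici.2 (mul_nonneg hθ.le ((half_pos hm).le.trans hx)))
    ((mul_right_injective₀ hθ.ne').ne (half_lt_self hm).ne)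
    ((mul_right_injective₀ hθ.ne').ne hxm) (mul_le_mul_of_nonneg_left hx hθ.le)
  simp only [Pi.neg_apply, h.tanh_mul_eq, ← mul_sub, sub_neg_eq_add] at hsecant
  have hchord : (-tanh (θ * (m / 2)) + m) / (θ * (m / 2 - m)) = (restoringRate θ m - 1) / θ := by
    rw [restoringRate, show m / 2 - m = -(m / 2) by ring]
    field_simp
    ring
  have hpoint : (-tanh (θ * x) + m) / (θ * (x - m)) * (θ * (x - m) ^ 2) =
      (-tanh (θ * x) + m) * (x - m) := by
    have := sub_ne_zero.2 hxm
    field_simp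
  have hmul := mul_le_mul_of_nonneg_right hsecant (mul_nonneg hθ.le (sq_nonneg (x - m)))
  rw [hchord, hpoint, ← mul_assoc, div_mul_cancel₀ _ hθ.ne'] at hmul
  linarith

lemma phiExponent_le_of_half_le (h : IsSpontaneousMagnetization θ m) (hx : m / 2 ≤ x) :
    phiExponent θ x ≤ phiExponent θ m - θ * restoringRate θ m / 2 * (x - m) ^ 2 := by
  set κ := restoringRate θ m
  let f : ℝ → ℝ := fun y => phiExponent θ y + θ * κ / 2 * (y - m) ^ 2
  have hf (y : ℝ) : HasDerivAt f (θ * (tanh (θ * y) - y + κ * (y - m))) y := by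
    have hquad : HasDerivAt (fun y : ℝ => (y - m) ^ 2) (2 * (y - m)) y := by
      simpa using ((hasDerivAt_id y).sub_const m).fun_pow 2
    exact ((hasDerivAt_phiExponent θ y).add (hquad.const_mul (θ * κ / 2))).congr_deriv (by ring)
  have hmax : f x ≤ f m := by
    refine le_of_sub_mul_deriv_nonpos (ordConnected_Ici (a := m / 2)) (fun y _ => hf y)
      (fun y hy => ?_) (half_le_self h.pos.le) hx
    nlinarith [h.sub_mul_tanh_sub_le hy, h.inverseTemperature_pos]
  simp only [f, sub_self] at hmax
  linarith

lemma phiExponent_le_half (h : IsSpontaneousMagnetization θ m) (hx : x ∈ Icc 0 (m / 2)) :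
    phiExponent θ x ≤ phiExponent θ (m / 2) := by
  refine le_of_sub_mul_deriv_nonpos ordConnected_Icc (fun y _ => hasDerivAt_phiExponent θ y)
    (fun y hy => ?_) (right_mem_Icc.2 (half_pos h.pos).le) hx
  have hdrift : 0 ≤ tanh (θ * y) - y := by
    rcases hy.1.eq_or_lt with rfl | hy₀
    · simp
    · exact sub_nonneg.2 ((h.lt_tanh_mul_iff hy₀).2 (hy.2.trans_lt (half_lt_self h.pos))).le
  exact mul_nonpos_of_nonpos_of_nonneg (sub_nonpos.2 hy.2)
    (mul_nonneg h.inverseTemperature_pos.le hdrift)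

lemma phiExponent_le (h : IsSpontaneousMagnetization θ m) (hx : 0 ≤ x) :
    phiExponent θ x ≤ phiExponent θ m - θ * restoringRate θ m / 8 * (x - m) ^ 2 := by
  have hrate : 0 < θ * restoringRate θ m := mul_pos h.inverseTemperature_pos h.restoringRate_pos
  rcases le_total (m / 2) x with hmx | hxm
  · nlinarith [h.phiExponent_le_of_half_le hmx, sq_nonneg (x - m)]
  · have hhalf := h.phiExponent_le_of_half_le le_rfl
    -- The gap `(m / 2 - m) ^ 2` at the midpoint is a quarter of this bound: hence `8 = 2 * 4`.
    have hsq : (x - m) ^ 2 ≤ m ^ 2 := by nlinarith [h.pos]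
    nlinarith [h.phiExponent_le_half ⟨hx, hxm⟩]

end IsSpontaneousMagnetization

lemma phiDensity_eq_exp (n : ℕ) (θ φ : ℝ) : phiDensity n θ φ = exp (n * phiExponent θ φ) := by
  rw [phiDensity, phiExponent]
  congr 1
  ring

lemma phiDensity_pos (n : ℕ) (θ φ : ℝ) : 0 < phiDensity n θ φ := exp_pos _

lemma continuous_phiDensity (n : ℕ) (θ : ℝ) : Continuous (phiDensity n θ) := by
  rw [funext (phiDensity_eq_exp n θ)]
  exact continuous_exp.comp (continuous_const.mul (continuous_phiExponent θ))

lemma measurable_ofReal_phiDensity (n : ℕ) (θ : ℝ) :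
    Measurable fun φ => ENNReal.ofReal (phiDensity n θ φ) :=
  (continuous_phiDensity n θ).measurable.ennreal_ofReal

lemma integrable_phiDensity {n : ℕ} (hn : n ≠ 0) {θ : ℝ} (hθ : 0 < θ) :
    Integrable (phiDensity n θ) := by
  have : (0 : ℝ) < n := by exact_mod_cast hn.bot_lt
  have hexponent (φ : ℝ) : phiExponent θ φ ≤ θ - θ / 4 * φ ^ 2 := by
    have hlog := log_cosh_le_abs (θ * φ)
    rw [abs_mul, abs_of_pos hθ] at hlog
    have hamgm : |φ| ≤ φ ^ 2 / 4 + 1 := by nlinarith [sq_abs φ, sq_nonneg (|φ| - 2)]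
    rw [phiExponent]
    nlinarith
  refine ((integrable_exp_neg_mul_sq (b := n * θ / 4) (by positivity)).const_mul
    (exp (n * θ))).mono' (continuous_phiDensity n θ).aestronglyMeasurable (ae_of_all _ fun φ => ?_)
  rw [norm_of_nonneg (phiDensity_pos n θ φ).le, phiDensity_eq_exp, ← exp_add, exp_le_exp]
  calc n * phiExponent θ φ ≤ n * (θ - θ / 4 * φ ^ 2) := by gcongr; exact hexponent φ
    _ = n * θ + -(n * θ / 4) * φ ^ 2 := by ring

lemma condPos_smul (μ : Measure ℝ) {c : ENNReal} (hc₀ : c ≠ 0) (hc : c ≠ ⊤) :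
    condPos (c • μ) = condPos μ := by
  rw [condPos, condPos, Measure.smul_apply, Measure.restrict_smul, smul_smul, smul_eq_mul,
    ENNReal.mul_inv (.inl hc₀) (.inl hc), mul_right_comm, ENNReal.inv_mul_cancel hc₀ hc, one_mul]

lemma condPos_phiMeasure {n : ℕ} (hn : n ≠ 0) {θ : ℝ} (hθ : 0 < θ) :
    condPos (phiMeasure n θ) = condPos (phiUnnorm n θ) := by
  have hfinite : phiUnnorm n θ univ ≠ ⊤ := by
    rw [phiUnnorm, withDensity_apply _ .univ, Measure.restrict_univ]
    exact (integrable_phiDensity hn hθ).lintegral_lt_top.ne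
  have hpos : phiUnnorm n θ univ ≠ 0 := by
    have hsupport : {φ | ENNReal.ofReal (phiDensity n θ φ) ≠ 0} = univ :=
      eq_univ_of_forall fun φ => (ENNReal.ofReal_pos.2 (phiDensity_pos n θ φ)).ne'
    rw [phiUnnorm, Ne, withDensity_apply_eq_zero (measurable_ofReal_phiDensity n θ), inter_univ,
      hsupport, volume_univ]
    exact ENNReal.top_ne_zero
  exact condPos_smul _ (ENNReal.inv_ne_zero.2 hfinite) (ENNReal.inv_ne_top.2 hpos)

lemma setIntegral_phiUnnorm (n : ℕ) (θ : ℝ) (F : ℝ → ℝ) :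
    ∫ φ in Ioi 0, F φ ∂phiUnnorm n θ = ∫ φ, F φ * (Ioi 0).indicator (phiDensity n θ) φ := by
  rw [phiUnnorm, setIntegral_withDensity_eq_setIntegral_toReal_smul
    (measurable_ofReal_phiDensity n θ) (ae_of_all _ fun _ => ENNReal.ofReal_lt_top) F
    measurableSet_Ioi, ← integral_indicator measurableSet_Ioi]
  refine integral_congr_ae (ae_of_all _ fun φ => ?_)
  simp only [indicator, ENNReal.toReal_ofReal (phiDensity_pos n θ φ).le, smul_eq_mul, mul_comm,
    mul_ite, mul_zero]

lemma integral_condPos_phiMeasure {n : ℕ} (hn : n ≠ 0) {θ : ℝ} (hθ : 0 < θ) (F : ℝ → ℝ) :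
    ∫ φ, F φ ∂condPos (phiMeasure n θ) =
      (∫ φ, F φ * (Ioi 0).indicator (phiDensity n θ) φ) /
        ∫ φ, (Ioi 0).indicator (phiDensity n θ) φ := by
  have hmass := setIntegral_phiUnnorm n θ fun _ => 1
  simp only [one_mul, setIntegral_const, smul_eq_mul, mul_one] at hmass
  rw [condPos_phiMeasure hn hθ, condPos, ← setAverage_eq', setAverage_eq, setIntegral_phiUnnorm,
    hmass, smul_eq_mul, inv_mul_eq_div]

lemma integral_eq_inv_mul_integral_add_div {s : ℝ} (hs : 0 < s) (a : ℝ) (g : ℝ → ℝ) :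
    ∫ φ, g φ = s⁻¹ * ∫ x, g (a + x / s) := by
  rw [Measure.integral_comp_div (fun y => g (a + y)), abs_of_pos hs, smul_eq_mul,
    integral_add_left_eq_self, inv_mul_cancel_left₀ hs.ne']

/-- The density of the fluctuation `x = √n (φ - m)` of a positive `φ`, normalized to be `1` at
`x = 0` when `0 < m`. -/
noncomputable def fluctuationDensity (n : ℕ) (θ m x : ℝ) : ℝ :=
  (Ioi 0).indicator (phiDensity n θ) (m + x / √n) / phiDensity n θ m

lemma integral_fluctuation {n : ℕ} (hn : n ≠ 0) {θ : ℝ} (hθ : 0 < θ) (m : ℝ) (F : ℝ → ℝ) :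
    ∫ φ, F (√n * (φ - m)) ∂condPos (phiMeasure n θ) =
      (∫ x, F x * fluctuationDensity n θ m x) / ∫ x, fluctuationDensity n θ m x := by
  have hs : 0 < √(n : ℝ) := sqrt_pos.2 (by exact_mod_cast hn.bot_lt)
  have hcancel (x : ℝ) : √n * (m + x / √n - m) = x := by field_simp; ring
  rw [integral_condPos_phiMeasure hn hθ, integral_eq_inv_mul_integral_add_div hs m,
    integral_eq_inv_mul_integral_add_div hs m (indicator _ _),
    mul_div_mul_left _ _ (inv_ne_zero hs.ne')]
  simp only [hcancel, fluctuationDensity, ← mul_div_assoc, integral_div]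
  rw [div_div_div_cancel_right₀ (phiDensity_pos n θ m).ne']

lemma measurable_fluctuationDensity (n : ℕ) (θ m : ℝ) : Measurable (fluctuationDensity n θ m) :=
  (((continuous_phiDensity n θ).measurable.indicator measurableSet_Ioi).comp
    ((measurable_id.div_const _).const_add m)).div_const _

lemma fluctuationDensity_nonneg (n : ℕ) (θ m x : ℝ) : 0 ≤ fluctuationDensity n θ m x :=
  div_nonneg (indicator_nonneg (fun φ _ => (phiDensity_pos n θ φ).le) _) (phiDensity_pos n θ m).le

lemma fluctuationDensity_of_pos {n : ℕ} {θ m x : ℝ} (hx : 0 < m + x / √n) :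
    fluctuationDensity n θ m x =
      exp (n * (phiExponent θ (m + x / √n) - phiExponent θ m)) := by
  rw [fluctuationDensity, indicator_of_mem (mem_Ioi.2 hx), phiDensity_eq_exp, phiDensity_eq_exp,
    ← exp_sub, mul_sub]

lemma IsSpontaneousMagnetization.fluctuationDensity_le {θ m : ℝ}
    (h : IsSpontaneousMagnetization θ m) {n : ℕ} (hn : n ≠ 0) (x : ℝ) :
    fluctuationDensity n θ m x ≤ exp (-(θ * restoringRate θ m / 8) * x ^ 2) := by
  have hn₀ : (0 : ℝ) < n := by exact_mod_cast hn.bot_lt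
  rcases lt_or_ge 0 (m + x / √n) with hx | hx
  · have hbound := h.phiExponent_le hx.le
    rw [add_sub_cancel_left, div_pow, sq_sqrt hn₀.le] at hbound
    rw [fluctuationDensity_of_pos hx, exp_le_exp]
    calc n * (phiExponent θ (m + x / √n) - phiExponent θ m)
        ≤ n * -(θ * restoringRate θ m / 8 * (x ^ 2 / n)) := by gcongr; linarith
      _ = -(θ * restoringRate θ m / 8) * x ^ 2 := by field_simp
  · rw [fluctuationDensity, indicator_of_notMem (notMem_Ioi.2 hx), zero_div]
    positivity

lemma IsSpontaneousMagnetization.exists_mul_phiExponent_sub {θ m : ℝ}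
    (h : IsSpontaneousMagnetization θ m) {n : ℕ} (hn : n ≠ 0) (x : ℝ) :
    ∃ ξ ∈ uIcc (θ * m) (θ * m + θ * (x / √n)),
      n * (phiExponent θ (m + x / √n) - phiExponent θ m) =
        -((θ - (1 - tanh ξ ^ 2) * θ ^ 2) / 2) * x ^ 2 := by
  obtain ⟨ξ, hξ, htaylor⟩ := exists_taylor_two hasDerivAt_log_cosh hasDerivAt_tanh
    (continuous_const.sub (continuous_tanh.pow 2)) (θ * m) (θ * (x / √n))
  refine ⟨ξ, hξ, ?_⟩
  have hn₀ : (n : ℝ) ≠ 0 := by exact_mod_cast hn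
  have hsq : n * (x / √n) ^ 2 = x ^ 2 := by
    rw [div_pow, sq_sqrt n.cast_nonneg, mul_div_cancel₀ _ hn₀]
  rw [phiExponent, phiExponent, mul_add, htaylor, h.tanh_mul_eq, ← hsq]
  ring

lemma aestronglyMeasurable_of_integrable_mul_exp {F : ℝ → ℝ} {c : ℝ}
    (hF : Integrable fun x => F x * exp (-c * x ^ 2)) : AEStronglyMeasurable F := by
  have hexp : Continuous fun x => exp (c * x ^ 2) := by fun_prop
  refine (hF.aestronglyMeasurable.mul hexp.aestronglyMeasurable).congr (ae_of_all _ fun x => ?_)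
  simp only [Pi.mul_apply, mul_assoc, ← exp_add, neg_mul, neg_add_cancel, exp_zero, mul_one]

section Limit

variable {θ m : ℕ → ℝ} {θ₀ m₀ : ℝ}

lemma tendsto_fluctuationDensity (h₀ : IsSpontaneousMagnetization θ₀ m₀)
    (hθ : Tendsto θ atTop (𝓝 θ₀)) (h : ∀ᶠ n in atTop, IsSpontaneousMagnetization (θ n) (m n))
    (x : ℝ) :
    Tendsto (fun n => fluctuationDensity n (θ n) (m n) x) atTop
      (𝓝 (exp (-((θ₀ - (1 - m₀ ^ 2) * θ₀ ^ 2) / 2) * x ^ 2))) := by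
  have hm := h₀.tendsto hθ h
  have hx := tendsto_div_sqrt_natCast x
  choose! ξ hξ hexponent using fun n (hn : n ≠ 0 ∧ IsSpontaneousMagnetization (θ n) (m n)) =>
    hn.2.exists_mul_phiExponent_sub hn.1 x
  have hev := (eventually_ne_atTop 0).and h
  have hξ_lim : Tendsto ξ atTop (𝓝 (θ₀ * m₀)) := by
    have hleft : Tendsto (fun n => θ n * m n) atTop (𝓝 (θ₀ * m₀)) := hθ.mul hm
    have hright : Tendsto (fun n => θ n * m n + θ n * (x / √n)) atTop (𝓝 (θ₀ * m₀)) := by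
      simpa only [mul_zero, add_zero] using hleft.add (hθ.mul hx)
    have hmin := hleft.min hright
    have hmax := hleft.max hright
    rw [min_self] at hmin
    rw [max_self] at hmax
    exact tendsto_of_tendsto_of_tendsto_of_le_of_le' hmin hmax
      (hev.mono fun n hn => (hξ n hn).1) (hev.mono fun n hn => (hξ n hn).2)
  have htanh : Tendsto (fun n => tanh (ξ n)) atTop (𝓝 m₀) := by
    have hcomp := (continuous_tanh.tendsto _).comp hξ_lim
    rwa [h₀.tanh_mul_eq] at hcomp
  have hpos : ∀ᶠ n : ℕ in atTop, 0 < m n + x / √n :=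
    (hm.add hx).eventually_const_lt (by simpa only [add_zero] using h₀.pos)
  have hlim := (continuous_exp.tendsto _).comp
    (((hθ.sub (((htanh.pow 2).const_sub 1).mul (hθ.pow 2))).div_const 2).neg.mul_const (x ^ 2))
  refine hlim.congr' ?_
  filter_upwards [hev, hpos] with n hn hn_pos
  rw [fluctuationDensity_of_pos hn_pos, hexponent n hn, Function.comp_apply]

lemma tendsto_integral_mul_fluctuationDensity (h₀ : IsSpontaneousMagnetization θ₀ m₀)
    (hθ : Tendsto θ atTop (𝓝 θ₀)) (h : ∀ᶠ n in atTop, IsSpontaneousMagnetization (θ n) (m n))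
    {F : ℝ → ℝ} (hF : ∀ c : ℝ, 0 < c → Integrable fun x => F x * exp (-c * x ^ 2)) :
    Tendsto (fun n => ∫ x, F x * fluctuationDensity n (θ n) (m n) x) atTop
      (𝓝 (∫ x, F x * exp (-((θ₀ - (1 - m₀ ^ 2) * θ₀ ^ 2) / 2) * x ^ 2))) := by
  set c : ℝ := θ₀ * restoringRate θ₀ m₀ / 8
  have hc : 0 < c := by
    have := mul_pos h₀.inverseTemperature_pos h₀.restoringRate_pos
    positivity
  have hrate : ∀ᶠ n in atTop, c / 2 ≤ θ n * restoringRate (θ n) (m n) / 8 := by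
    have hm := (h₀.tendsto hθ h).div_const 2
    have htanh : Tendsto (fun n => tanh (θ n * (m n / 2))) atTop (𝓝 (tanh (θ₀ * (m₀ / 2)))) :=
      (continuous_tanh.tendsto _).comp (hθ.mul hm)
    have hlim : Tendsto (fun n => θ n * restoringRate (θ n) (m n) / 8) atTop (𝓝 c) :=
      (hθ.mul ((htanh.sub hm).div hm (half_pos h₀.pos).ne')).div_const 8
    exact hlim.eventually_const_le (half_lt_self hc)
  refine tendsto_integral_filter_of_dominated_convergence
    (fun x => ‖F x * exp (-(c / 2) * x ^ 2)‖)
    (Eventually.of_forall fun n => (aestronglyMeasurable_of_integrable_mul_exp (hF 1 one_pos)).mul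
      (measurable_fluctuationDensity n _ _).aestronglyMeasurable)
    ?_ (hF _ (half_pos hc)).norm
    (ae_of_all _ fun x => (tendsto_fluctuationDensity h₀ hθ h x).const_mul (F x))
  filter_upwards [h, hrate, eventually_ne_atTop 0] with n hmag hle hn
  refine ae_of_all _ fun x => ?_
  rw [norm_mul, norm_mul, norm_of_nonneg (fluctuationDensity_nonneg n _ _ x),
    norm_of_nonneg (exp_pos _).le]
  gcongr
  exact (hmag.fluctuationDensity_le hn x).trans (by gcongr)

end Limit

lemma integral_gaussianReal_eq_div {b : ℝ} (hb : 0 < b) (F : ℝ → ℝ) :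
    ∫ x, F x ∂gaussianReal 0 (1 / b).toNNReal =
      (∫ x, F x * exp (-(b / 2) * x ^ 2)) / ∫ x, exp (-(b / 2) * x ^ 2) := by
  have hv : (1 / b).toNNReal ≠ 0 := (toNNReal_pos.2 (one_div_pos.2 hb)).ne'
  have hpdf (x : ℝ) : gaussianPDFReal 0 (1 / b).toNNReal x =
      (√(π / (b / 2)))⁻¹ * exp (-(b / 2) * x ^ 2) := by
    rw [gaussianPDFReal, coe_toNNReal _ (one_div_pos.2 hb).le, sub_zero]
    congr 3 <;> field_simp
  rw [integral_gaussianReal_eq_integral_smul hv, integral_gaussian,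
    ← inv_mul_eq_div (√(π / (b / 2))), ← integral_const_mul]
  simp only [hpdf, smul_eq_mul, mul_assoc, mul_comm (F _)]

lemma integrable_bounded_mul_exp (f : BoundedContinuousFunction ℝ ℝ) {c : ℝ} (hc : 0 < c) :
    Integrable fun x => f x * exp (-c * x ^ 2) :=
  (integrable_exp_neg_mul_sq hc).bdd_mul f.continuous.aestronglyMeasurable
    (ae_of_all _ f.norm_coe_le_norm)

lemma integrable_pow_mul_exp (k : ℕ) {c : ℝ} (hc : 0 < c) :
    Integrable fun x : ℝ => x ^ k * exp (-c * x ^ 2) := by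
  simpa only [rpow_natCast] using
    integrable_rpow_mul_exp_neg_mul_sq hc (s := k) (neg_one_lt_zero.trans_le k.cast_nonneg)

end CurieWeiss

theorem stmt10_general {θ m : ℕ → ℝ} {θ₀ m₀ : ℝ}
    (h₀ : CurieWeiss.IsSpontaneousMagnetization θ₀ m₀) (hθ : Tendsto θ atTop (nhds θ₀))
    (h : ∀ᶠ n in atTop, CurieWeiss.IsSpontaneousMagnetization (θ n) (m n)) {F : ℝ → ℝ}
    (hF : ∀ c : ℝ, 0 < c → Integrable fun x => F x * Real.exp (-c * x ^ 2)) :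
    Tendsto (fun n : ℕ => ∫ φ, F (√n * (φ - m n)) ∂condPos (phiMeasure n (θ n))) atTop
      (nhds (∫ x, F x ∂gaussianReal 0 (1 / (θ₀ - (1 - m₀ ^ 2) * θ₀ ^ 2)).toNNReal)) := by
  have hnum := CurieWeiss.tendsto_integral_mul_fluctuationDensity h₀ hθ h hF
  have hden := CurieWeiss.tendsto_integral_mul_fluctuationDensity h₀ hθ h (F := fun _ => 1)
    fun c hc => by simpa only [one_mul] using integrable_exp_neg_mul_sq hc
  simp only [one_mul] at hden
  have hprecision := h₀.precision_pos
  have hmass : ∫ x, Real.exp (-((θ₀ - (1 - m₀ ^ 2) * θ₀ ^ 2) / 2) * x ^ 2) ≠ 0 := by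
    rw [integral_gaussian]
    positivity
  rw [CurieWeiss.integral_gaussianReal_eq_div hprecision]
  refine (hnum.div hden hmass).congr' ?_
  filter_upwards [h, eventually_ne_atTop 0] with n hmag hn
  exact (CurieWeiss.integral_fluctuation hn hmag.inverseTemperature_pos (m n) F).symm

theorem stmt10 (θ₀ h : ℝ) (hθ : 1 < θ₀) (m : ℝ → ℝ)
    (hm : ∀ θ : ℝ, 1 < θ → 0 < m θ ∧ Real.tanh (θ * m θ) = m θ) :
    (∀ f : BoundedContinuousFunction ℝ ℝ,
      Tendsto (fun n : ℕ =>
          ∫ φ, f (Real.sqrt (n : ℝ) * (φ - m (θ₀ + h / Real.sqrt (n : ℝ)))) ∂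
            condPos (phiMeasure n (θ₀ + h / Real.sqrt (n : ℝ))))
        atTop
        (nhds (∫ x, f x ∂ gaussianReal 0
          (Real.toNNReal (1 / (θ₀ - (1 - m θ₀ ^ 2) * θ₀ ^ 2)))))) ∧
    (∀ k : ℕ,
      Tendsto (fun n : ℕ =>
          ∫ φ, (Real.sqrt (n : ℝ) * (φ - m (θ₀ + h / Real.sqrt (n : ℝ)))) ^ k ∂
            condPos (phiMeasure n (θ₀ + h / Real.sqrt (n : ℝ))))
        atTop
        (nhds (∫ x, x ^ k ∂ gaussianReal 0
          (Real.toNNReal (1 / (θ₀ - (1 - m θ₀ ^ 2) * θ₀ ^ 2)))))) := by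
  have hlim := (CurieWeiss.tendsto_div_sqrt_natCast h).const_add θ₀
  rw [add_zero] at hlim
  have hmag (θ : ℝ) (hθ₁ : 1 < θ) : CurieWeiss.IsSpontaneousMagnetization θ (m θ) :=
    ⟨(hm θ hθ₁).1, (hm θ hθ₁).2⟩
  have hmag_ev := (hlim.eventually_const_lt hθ).mono fun _ => hmag _
  exact ⟨fun f => stmt10_general (hmag θ₀ hθ) hlim hmag_ev fun _ =>
      CurieWeiss.integrable_bounded_mul_exp f,
    fun k => stmt10_general (hmag θ₀ hθ) hlim hmag_ev fun _ => CurieWeiss.integrable_pow_mul_exp k⟩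
end

section
/- Fix θ₀ > 1 and h ∈ ℝ, and set θ_n := θ₀ + h/√n. Then lim_{n→∞} [ Z_n(θ_n,CW) − Z_n(θ₀,CW) − (1/2)·√n·h·m(θ₀)² ] = R(θ₀)·h²/2, where R(θ₀) := m(θ₀)²·σ²(θ₀). -/
open Filter

noncomputable def spin (b : Bool) : ℝ := if b then 1 else -1

noncomputable def mag (n : ℕ) (x : Fin n → Bool) : ℝ := (∑ i, spin (x i)) / n

/-- Log normalizing constant of the Curie–Weiss model. -/
noncomputable def Zcw (n : ℕ) (θ : ℝ) : ℝ :=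
  Real.log (∑ x : Fin n → Bool, Real.exp ((n : ℝ) * θ * mag n x ^ 2 / 2))

open MeasureTheory ProbabilityTheory Set Topology
open scoped NNReal

/-! By the Hubbard–Stratonovich transform, `exp (Zcw n θ)` is the Gaussian integral of
`(2 * cosh s) ^ n`, that is, up to an explicit prefactor, the integral of `exp (n * Φ_θ s)` with
`Φ_θ s = log (2 * cosh s) - s ^ 2 / (2 * θ)`. On the half-line `s > 0` the function `Φ_θ` has a
unique maximiser, `s = θ * m`. Replacing `θ` by `θ + h / √n` multiplies the integrand by
`exp (b * √n * s ^ 2)` with `b → h / (2 * θ ^ 2)`; on the Laplace scale `s = θ * m + u / √n` this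
is a constant factor times a linear tilt of the limiting Gaussian in `u`. The tilted Gaussian
integral produces the quadratic term in `h`. -/

section Calculus

variable {f f' : ℝ → ℝ} {x₀ : ℝ}

lemma sub_le_neg_mul_sq_of_hasDerivAt {S : Set ℝ} {κ s : ℝ} (hS : Convex ℝ S)
    (hf : ∀ t ∈ S, HasDerivAt f (f' t) t)
    (hf' : ∀ t ∈ S, (t - x₀) * f' t ≤ -2 * κ * (t - x₀) ^ 2) (hx₀ : x₀ ∈ S) (hs : s ∈ S) :
    f s - f x₀ ≤ -κ * (s - x₀) ^ 2 := by
  let γ : ℝ → ℝ := AffineMap.lineMap x₀ s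
  have hγ_sub (t : ℝ) : γ t - x₀ = t * (s - x₀) := by simp [γ, AffineMap.lineMap_apply]
  have hγ_mem {t : ℝ} (ht : t ∈ Icc (0 : ℝ) 1) : γ t ∈ S := hS.lineMap_mem hx₀ hs ht
  have hderiv {t : ℝ} (ht : t ∈ Icc (0 : ℝ) 1) :
      HasDerivAt (fun t ↦ f (γ t) + κ * (γ t - x₀) ^ 2)
        ((f' (γ t) + 2 * κ * (γ t - x₀)) * (s - x₀)) t := by
    have hγ : HasDerivAt γ (s - x₀) t := AffineMap.hasDerivAt_lineMap
    refine (((hf _ (hγ_mem ht)).comp t hγ).add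
      (((hγ.sub_const x₀).pow 2).const_mul κ)).congr_deriv ?_
    ring
  have hanti : AntitoneOn (fun t ↦ f (γ t) + κ * (γ t - x₀) ^ 2) (Icc 0 1) := by
    refine antitoneOn_of_hasDerivWithinAt_nonpos (convex_Icc 0 1)
      (fun t ht ↦ (hderiv ht).continuousAt.continuousWithinAt)
      (fun t ht ↦ (hderiv (interior_subset ht)).hasDerivWithinAt) fun t ht ↦ ?_
    have htpos : 0 < t := (interior_Icc (a := (0 : ℝ)) ▸ ht).1
    have hsign := hf' (γ t) (hγ_mem (interior_subset ht))
    refine nonpos_of_mul_nonpos_right ?_ htpos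
    calc t * ((f' (γ t) + 2 * κ * (γ t - x₀)) * (s - x₀))
        = (γ t - x₀) * f' (γ t) + 2 * κ * (γ t - x₀) ^ 2 := by rw [hγ_sub]; ring
      _ ≤ 0 := by linarith
  have h01 := hanti (left_mem_Icc.2 zero_le_one) (right_mem_Icc.2 zero_le_one) zero_le_one
  simp only [γ, AffineMap.lineMap_apply_zero, AffineMap.lineMap_apply_one, sub_self] at h01
  linarith

lemma sub_mul_sub_le_slope_mul_sq {φ : ℝ → ℝ} {S : Set ℝ} {c s : ℝ} (hφ : ConcaveOn ℝ S φ)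
    (hx₀ : x₀ ∈ S) (hc : c ∈ S) (hs : s ∈ S) (hcx : c ≠ x₀) (hcs : c ≤ s) :
    (s - x₀) * (φ s - φ x₀) ≤ slope φ x₀ c * (s - x₀) ^ 2 := by
  rcases eq_or_ne s x₀ with rfl | hne
  · simp
  calc (s - x₀) * (φ s - φ x₀) = slope φ x₀ s * (s - x₀) ^ 2 := by
        rw [slope_def_field]
        field_simp [sub_ne_zero.2 hne]
    _ ≤ slope φ x₀ c * (s - x₀) ^ 2 := by
        gcongr
        exact hφ.slope_anti hx₀ ⟨hc, hcx⟩ ⟨hs, hne⟩ hcs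

lemma exists_sub_le_neg_mul_sq_of_strictConcaveOn_deriv {a : ℝ} (hax : a < x₀)
    (hf : ∀ s ∈ Ici a, HasDerivAt f (f' s) s) (hf' : StrictConcaveOn ℝ (Ici a) f')
    (ha : 0 ≤ f' a) (hx₀ : f' x₀ = 0) :
    ∃ κ > 0, ∀ s ∈ Ici a, f s - f x₀ ≤ -κ * (s - x₀) ^ 2 := by
  obtain ⟨c, rfl⟩ : ∃ c, a = 2 * c - x₀ := ⟨(a + x₀) / 2, by ring⟩
  have hcx : c < x₀ := by linarith
  have hac : 2 * c - x₀ ≤ c := by linarith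
  have hmid : 0 < f' c := by
    have hlt := hf'.2 self_mem_Ici hax.le hax.ne one_half_pos one_half_pos (add_halves 1)
    simp only [smul_eq_mul, hx₀] at hlt
    rw [show 1 / 2 * (2 * c - x₀) + 1 / 2 * x₀ = c by ring] at hlt
    linarith
  obtain ⟨κ, hκ⟩ : ∃ κ, slope f' x₀ c = -2 * κ := ⟨-slope f' x₀ c / 2, by ring⟩
  have hκ_pos : 0 < κ := by
    have hslope : slope f' x₀ c < 0 := by
      rw [slope_def_field, hx₀, sub_zero]
      exact div_neg_of_pos_of_neg hmid (sub_neg.2 hcx)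
    linarith
  have hright : ∀ s ∈ Ici c, f s - f x₀ ≤ -κ * (s - x₀) ^ 2 := by
    refine fun s hs ↦ sub_le_neg_mul_sq_of_hasDerivAt (convex_Ici c)
      (fun t ht ↦ hf t (hac.trans ht)) (fun t ht ↦ ?_) hcx.le hs
    simpa only [hκ, hx₀, sub_zero] using
      sub_mul_sub_le_slope_mul_sq hf'.concaveOn hax.le hac (hac.trans ht) hcx.ne ht
  have hmono : MonotoneOn f (Icc (2 * c - x₀) x₀) := by
    refine monotoneOn_of_hasDerivWithinAt_nonneg (convex_Icc _ x₀)
      (fun t ht ↦ (hf t ht.1).continuousAt.continuousWithinAt)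
      (fun t ht ↦ (hf t (interior_subset ht).1).hasDerivWithinAt) fun t ht ↦ ?_
    have hmin := hf'.concaveOn.min_le_of_mem_Icc self_mem_Ici hax.le (interior_subset ht)
    rwa [hx₀, min_eq_right ha] at hmin
  refine ⟨κ / 4, by positivity, fun s hs ↦ ?_⟩
  rcases le_total c s with hcs | hsc
  · nlinarith [hright s hcs, mul_nonneg hκ_pos.le (sq_nonneg (s - x₀))]
  · have hsx : (s - x₀) ^ 2 ≤ 4 * (c - x₀) ^ 2 := by nlinarith [mem_Ici.1 hs]
    calc f s - f x₀ ≤ f c - f x₀ := by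
          gcongr
          exact hmono ⟨hs, hsc.trans hcx.le⟩ ⟨hac, hcx.le⟩ hsc
      _ ≤ -κ * (c - x₀) ^ 2 := hright c self_mem_Ici
      _ ≤ -(κ / 4) * (s - x₀) ^ 2 := by nlinarith

lemma tendsto_sub_div_sq_of_hasDerivAt {c : ℝ} (hf : ∀ᶠ s in 𝓝 x₀, HasDerivAt f (f' s) s)
    (hx₀ : f' x₀ = 0) (hf' : HasDerivAt f' c x₀) :
    Tendsto (fun s ↦ (f s - f x₀) / (s - x₀) ^ 2) (𝓝[≠] x₀) (𝓝 (c / 2)) := by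
  have hsq (s : ℝ) : HasDerivAt (fun s ↦ (s - x₀) ^ 2) (2 * (s - x₀)) s := by
    simpa using ((hasDerivAt_id s).sub_const x₀).fun_pow 2
  refine HasDerivAt.lhopital_zero_nhdsNE (f' := f') (g' := fun s ↦ 2 * (s - x₀))
    (hf.filter_mono nhdsWithin_le_nhds |>.mono fun s hs ↦ hs.sub_const _)
    (.of_forall hsq) ?_ ?_ ?_ ?_
  · filter_upwards [self_mem_nhdsWithin] with s hs
    exact mul_ne_zero two_ne_zero (sub_ne_zero.2 hs)
  · exact tendsto_sub_nhds_zero_iff.2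
      (hf.self_of_nhds.continuousAt.tendsto.mono_left nhdsWithin_le_nhds)
  · exact Tendsto.mono_left (by simpa using (hsq x₀).continuousAt.tendsto) nhdsWithin_le_nhds
  · refine ((hasDerivAt_iff_tendsto_slope.1 hf').div_const 2).congr fun s ↦ ?_
    rw [slope_def_field, hx₀, sub_zero, div_div, mul_comm]

end Calculus

section Gaussian

variable {a : ℝ}

lemma exp_neg_mul_sq_add_mul (ha : a ≠ 0) (b u : ℝ) :
    Real.exp (-a * u ^ 2 + b * u) =
      Real.exp (-a * (u - b / (2 * a)) ^ 2) * Real.exp (b ^ 2 / (4 * a)) := by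
  rw [← Real.exp_add]
  congr 1
  field_simp
  ring

lemma integral_exp_neg_mul_sq_add_mul (ha : 0 < a) (b : ℝ) :
    ∫ u : ℝ, Real.exp (-a * u ^ 2 + b * u) = √(Real.pi / a) * Real.exp (b ^ 2 / (4 * a)) := by
  simp_rw [exp_neg_mul_sq_add_mul ha.ne']
  rw [integral_mul_const, integral_sub_right_eq_self (fun u ↦ Real.exp (-a * u ^ 2)),
    integral_gaussian]

lemma integral_exp_mul_gaussianReal (v : ℝ≥0) (t : ℝ) :
    ∫ s, Real.exp (t * s) ∂gaussianReal 0 v = Real.exp (v * t ^ 2 / 2) := by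
  have hmgf := congrFun (mgf_id_gaussianReal (μ := 0) (v := v)) t
  simpa only [mgf, id, zero_mul, zero_add] using hmgf

end Gaussian

section Laplace

variable {ι : Type*} {l : Filter ι} {r b : ι → ℝ} {f g : ℝ → ℝ} {S : Set ℝ} {x₀ g' a β : ℝ}

/-- The exponent of the Laplace integral at scale `r`: the phase `f`, weighted by `r ^ 2`, and the
perturbation `g`, weighted by `b * r`, both recentred at `x₀`. -/
def laplaceExponent (f g : ℝ → ℝ) (x₀ b r s : ℝ) : ℝ :=
  r ^ 2 * (f s - f x₀) + b * r * (g s - g x₀)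

lemma tendsto_sq_mul_sub_of_tendsto_div_sq (hr : Tendsto r l atTop)
    (hf : Tendsto (fun s ↦ (f s - f x₀) / (s - x₀) ^ 2) (𝓝[≠] x₀) (𝓝 a)) (u : ℝ) :
    Tendsto (fun i ↦ r i ^ 2 * (f (x₀ + (r i)⁻¹ * u) - f x₀)) l (𝓝 (a * u ^ 2)) := by
  rcases eq_or_ne u 0 with rfl | hu
  · simp [tendsto_const_nhds]
  have hr0 : ∀ᶠ i in l, r i ≠ 0 := hr.eventually_ne_atTop 0
  have hpt : Tendsto (fun i ↦ x₀ + (r i)⁻¹ * u) l (𝓝[≠] x₀) := by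
    refine tendsto_nhdsWithin_iff.2 ⟨?_, ?_⟩
    · simpa using (hr.inv_tendsto_atTop.mul_const u).const_add x₀
    · filter_upwards [hr0] with i hi
      simp [hi, hu]
  refine ((hf.comp hpt).mul_const (u ^ 2)).congr' ?_
  filter_upwards [hr0] with i hi
  simp only [Function.comp_apply, add_sub_cancel_left]
  field_simp

lemma tendsto_laplaceExponent (hr : Tendsto r l atTop) (hb : Tendsto b l (𝓝 β))
    (hf : Tendsto (fun s ↦ (f s - f x₀) / (s - x₀) ^ 2) (𝓝[≠] x₀) (𝓝 (-a)))
    (hg : HasDerivAt g g' x₀) (u : ℝ) :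
    Tendsto (fun i ↦ laplaceExponent f g x₀ (b i) (r i) (x₀ + (r i)⁻¹ * u)) l
      (𝓝 (-a * u ^ 2 + β * g' * u)) := by
  have hg_lim : Tendsto (fun i ↦ r i * (g (x₀ + (r i)⁻¹ * u) - g x₀)) l (𝓝 (u * g')) := by
    simpa using hg.hasFDerivAt.lim u (tendsto_norm_atTop_atTop.comp hr)
  have hlim := (tendsto_sq_mul_sub_of_tendsto_div_sq hr hf u).add (hb.mul hg_lim)
  refine (hlim.congr fun i ↦ ?_).trans_eq ?_
  · rw [laplaceExponent, mul_assoc (b i)]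
  · congr 1
    ring

lemma laplaceExponent_le {κ C B b r s : ℝ} (hr : 0 < r) (hκ : 0 < κ) (hb : |b| ≤ B)
    (hBr : B * C / (κ / 2) ≤ r) (hf : f s - f x₀ ≤ -κ * (s - x₀) ^ 2)
    (hg : |g s - g x₀| ≤ C * (|s - x₀| + (s - x₀) ^ 2)) :
    laplaceExponent f g x₀ b r s ≤ -(κ / 4) * (r * (s - x₀)) ^ 2 + (B * C) ^ 2 / κ := by
  set d := s - x₀
  have hphase : r ^ 2 * (f s - f x₀) ≤ -κ * (r * d) ^ 2 := by
    calc r ^ 2 * (f s - f x₀) ≤ r ^ 2 * (-κ * d ^ 2) := by gcongr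
      _ = -κ * (r * d) ^ 2 := by ring
  have hpert : b * r * (g s - g x₀) ≤ B * C * |r * d| + κ / 2 * (r * d) ^ 2 := by
    have hB : 0 ≤ B := (abs_nonneg b).trans hb
    calc b * r * (g s - g x₀) ≤ |b * r * (g s - g x₀)| := le_abs_self _
      _ = |b| * r * |g s - g x₀| := by rw [abs_mul, abs_mul, abs_of_pos hr]
      _ ≤ B * r * (C * (|d| + d ^ 2)) := by gcongr
      _ = B * C * |r * d| + B * C * (r * d ^ 2) := by rw [abs_mul, abs_of_pos hr]; ring
      _ ≤ B * C * |r * d| + r * (κ / 2) * (r * d ^ 2) := by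
          gcongr _ + ?_ * _
          exact (div_le_iff₀ (by positivity)).1 hBr
      _ = B * C * |r * d| + κ / 2 * (r * d) ^ 2 := by ring
  have hyoung : B * C * |r * d| ≤ κ / 4 * (r * d) ^ 2 + (B * C) ^ 2 / κ := by
    have hsq : 0 ≤ (κ / 2 * |r * d| - B * C) ^ 2 / κ := by positivity
    have hexpand : (κ / 2 * |r * d| - B * C) ^ 2 / κ =
        κ / 4 * |r * d| ^ 2 + (B * C) ^ 2 / κ - B * C * |r * d| := by
      field_simp
      ring
    rw [sq_abs] at hexpand
    linarith
  rw [laplaceExponent]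
  linarith

lemma smul_setIntegral_eq_integral_indicator {E : Type*} [NormedAddCommGroup E] [NormedSpace ℝ E]
    {r : ℝ} (hr : 0 < r) (hS : MeasurableSet S) (F : ℝ → E) (x₀ : ℝ) :
    r • ∫ s in S, F s = ∫ u, S.indicator F (x₀ + r⁻¹ * u) := by
  rw [Measure.integral_comp_inv_mul_left (fun s ↦ S.indicator F (x₀ + s)),
    integral_add_left_eq_self, integral_indicator hS, abs_of_pos hr]

theorem tendsto_mul_setIntegral_exp_laplaceExponent [l.IsCountablyGenerated] {κ C : ℝ}
    (hr : Tendsto r l atTop) (hb : Tendsto b l (𝓝 β)) (hS : MeasurableSet S) (hx₀ : S ∈ 𝓝 x₀)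
    (hfm : Measurable f) (hgm : Measurable g) (hκ : 0 < κ)
    (hf_le : ∀ s ∈ S, f s - f x₀ ≤ -κ * (s - x₀) ^ 2)
    (hf : Tendsto (fun s ↦ (f s - f x₀) / (s - x₀) ^ 2) (𝓝[≠] x₀) (𝓝 (-a)))
    (hg_le : ∀ s ∈ S, |g s - g x₀| ≤ C * (|s - x₀| + (s - x₀) ^ 2))
    (hg : HasDerivAt g g' x₀) :
    Tendsto (fun i ↦ r i * ∫ s in S, Real.exp (laplaceExponent f g x₀ (b i) (r i) s)) l
      (𝓝 (∫ u : ℝ, Real.exp (-a * u ^ 2 + β * g' * u))) := by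
  let F (i : ι) (s : ℝ) : ℝ := Real.exp (laplaceExponent f g x₀ (b i) (r i) s)
  have hr_pos : ∀ᶠ i in l, 0 < r i := hr.eventually_gt_atTop 0
  have hrescale : ∀ᶠ i in l, ∫ u, S.indicator (F i) (x₀ + (r i)⁻¹ * u) = r i * ∫ s in S, F i s :=
    hr_pos.mono fun i hi ↦ (smul_setIntegral_eq_integral_indicator hi hS (F i) x₀).symm
  refine Tendsto.congr' hrescale ?_
  refine tendsto_integral_filter_of_dominated_convergence
    (fun u ↦ Real.exp (-(κ / 4) * u ^ 2) * Real.exp (((|β| + 1) * C) ^ 2 / κ)) ?_ ?_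
    ((integrable_exp_neg_mul_sq (by positivity)).mul_const _) (.of_forall fun u ↦ ?_)
  · refine .of_forall fun i ↦ Measurable.aestronglyMeasurable ?_
    have hF : Measurable (F i) := by
      unfold F laplaceExponent
      fun_prop
    exact (hF.indicator hS).comp (by fun_prop)
  · have hb_le : ∀ᶠ i in l, |b i| ≤ |β| + 1 := hb.abs.eventually_le_const (lt_add_one _)
    filter_upwards [hr_pos, hb_le, hr.eventually_ge_atTop ((|β| + 1) * C / (κ / 2))]
      with i hri hbi hBr
    refine .of_forall fun u ↦ ?_
    rw [← Real.exp_add, Real.norm_eq_abs]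
    by_cases hu : x₀ + (r i)⁻¹ * u ∈ S
    · rw [indicator_of_mem hu, Real.abs_exp, Real.exp_le_exp]
      have hle := laplaceExponent_le hri hκ hbi hBr (hf_le _ hu) (hg_le _ hu)
      rwa [add_sub_cancel_left, mul_inv_cancel_left₀ hri.ne'] at hle
    · rw [indicator_of_notMem hu, abs_zero]
      positivity
  · have hpt : Tendsto (fun i ↦ x₀ + (r i)⁻¹ * u) l (𝓝 x₀) := by
      simpa using (hr.inv_tendsto_atTop.mul_const u).const_add x₀
    refine (tendsto_laplaceExponent hr hb hf hg u).rexp.congr' ?_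
    filter_upwards [hpt.eventually_mem hx₀] with i hi
    exact (indicator_of_mem (f := F i) hi).symm

end Laplace

section Tanh

lemma hasDerivAt_tanh (s : ℝ) : HasDerivAt Real.tanh (1 - Real.tanh s ^ 2) s := by
  have hcosh : Real.cosh s ≠ 0 := (Real.cosh_pos s).ne'
  rw [show Real.tanh = Real.sinh / Real.cosh from funext Real.tanh_eq_sinh_div_cosh]
  refine ((Real.hasDerivAt_sinh s).div (Real.hasDerivAt_cosh s) hcosh).congr_deriv ?_
  simp only [Pi.div_apply]
  field_simp

lemma strictMono_tanh : StrictMono Real.tanh :=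
  strictMono_of_hasDerivAt_pos hasDerivAt_tanh fun s ↦ sub_pos.2 (Real.tanh_sq_lt_one s)

lemma strictConcaveOn_tanh : StrictConcaveOn ℝ (Ici 0) Real.tanh := by
  refine StrictAntiOn.strictConcaveOn_of_deriv (convex_Ici 0)
    (fun s _ ↦ (hasDerivAt_tanh s).continuousAt.continuousWithinAt) fun s hs t _ hst ↦ ?_
  have htanh : 0 ≤ Real.tanh s := Real.tanh_zero ▸ strictMono_tanh.monotone (interior_subset hs)
  rw [(hasDerivAt_tanh s).deriv, (hasDerivAt_tanh t).deriv]
  gcongr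
  exact strictMono_tanh hst

end Tanh

/-- The phase `Φ_θ` of the Hubbard–Stratonovich representation of the Curie–Weiss partition
function. The variable `s` stands for `θ` times the magnetisation. -/
noncomputable def cwPhase (θ s : ℝ) : ℝ :=
  Real.log (2 * Real.cosh s) - s ^ 2 / (2 * θ)

section MeanField

variable {θ m : ℝ}

lemma hasDerivAt_cwPhase (θ s : ℝ) : HasDerivAt (cwPhase θ) (Real.tanh s - s / θ) s := by
  have hcosh : 2 * Real.cosh s ≠ 0 := mul_ne_zero two_ne_zero (Real.cosh_pos s).ne'
  have hlog := ((Real.hasDerivAt_cosh s).const_mul 2).log hcosh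
  have hsq : HasDerivAt (fun s ↦ s ^ 2 / (2 * θ)) (s / θ) s := by
    refine ((hasDerivAt_pow 2 s).div_const (2 * θ)).congr_deriv ?_
    rw [pow_one, Nat.cast_ofNat, mul_div_mul_left _ _ two_ne_zero]
  refine (hlog.fun_sub hsq).congr_deriv ?_
  rw [mul_div_mul_left _ _ two_ne_zero, ← Real.tanh_eq_sinh_div_cosh]

lemma measurable_cwPhase (θ : ℝ) : Measurable (cwPhase θ) := by
  unfold cwPhase
  fun_prop

lemma mul_one_sub_sq_lt_one (hθ : 0 < θ) (hm : 0 < m) (hfix : Real.tanh (θ * m) = m) :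
    θ * (1 - m ^ 2) < 1 := by
  have hs : 0 < θ * m := mul_pos hθ hm
  have htangent := strictConcaveOn_tanh.lt_slope_of_hasDerivAt self_mem_Ici hs.le hs
    (hasDerivAt_tanh (θ * m))
  rw [slope_def_field, Real.tanh_zero, hfix, sub_zero, sub_zero, mul_comm θ m,
    div_mul_cancel_left₀ hm.ne'] at htangent
  calc θ * (1 - m ^ 2) < θ * θ⁻¹ := by gcongr
    _ = 1 := mul_inv_cancel₀ hθ.ne'

lemma exists_cwPhase_sub_le (hθ : 0 < θ) (hm : 0 < m) (hfix : Real.tanh (θ * m) = m) :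
    ∃ κ > 0, ∀ s ∈ Ici 0, cwPhase θ s - cwPhase θ (θ * m) ≤ -κ * (s - θ * m) ^ 2 := by
  have hlin : ConvexOn ℝ (Ici 0) fun s : ℝ ↦ s / θ := by
    simpa only [div_eq_inv_mul, smul_eq_mul, id] using
      (convexOn_id (convex_Ici (0 : ℝ))).smul (inv_nonneg.2 hθ.le)
  refine exists_sub_le_neg_mul_sq_of_strictConcaveOn_deriv (mul_pos hθ hm)
    (fun s _ ↦ hasDerivAt_cwPhase θ s) (strictConcaveOn_tanh.sub_convexOn hlin) ?_ ?_
  · simp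
  · rw [hfix, mul_div_cancel_left₀ m hθ.ne', sub_self]

lemma tendsto_cwPhase_sub_div_sq (hθ : θ ≠ 0) (hfix : Real.tanh (θ * m) = m) :
    Tendsto (fun s ↦ (cwPhase θ s - cwPhase θ (θ * m)) / (s - θ * m) ^ 2) (𝓝[≠] (θ * m))
      (𝓝 (-((1 - θ * (1 - m ^ 2)) / (2 * θ)))) := by
  have hderiv := (hasDerivAt_tanh (θ * m)).fun_sub ((hasDerivAt_id (θ * m)).div_const θ)
  have hcrit : Real.tanh (θ * m) - θ * m / θ = 0 := by
    rw [hfix, mul_div_cancel_left₀ m hθ, sub_self]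
  convert tendsto_sub_div_sq_of_hasDerivAt (.of_forall (hasDerivAt_cwPhase θ)) hcrit hderiv using 2
  rw [hfix]
  field_simp
  ring

end MeanField

section HubbardStratonovich

variable {n : ℕ} {θ : ℝ}

lemma sum_exp_mul_sum_spin (n : ℕ) (s : ℝ) :
    ∑ x : Fin n → Bool, Real.exp ((∑ i, spin (x i)) * s) = (2 * Real.cosh s) ^ n := by
  have hcosh : ∑ b : Bool, Real.exp (spin b * s) = 2 * Real.cosh s := by
    simp only [Fintype.sum_bool, spin, ↓reduceIte, Bool.false_eq_true, one_mul, neg_one_mul]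
    rw [Real.cosh_eq, mul_div_cancel₀ _ two_ne_zero]
  simp_rw [Finset.sum_mul, Real.exp_sum]
  rw [← hcosh, Fintype.sum_pow]

lemma exp_Zcw_eq_integral_gaussianReal (n : ℕ) (hθ : 0 ≤ θ) :
    Real.exp (Zcw n θ) =
      ∫ s, (2 * Real.cosh s) ^ n ∂gaussianReal 0 (θ / n).toNNReal := by
  simp_rw [← sum_exp_mul_sum_spin]
  rw [integral_finsetSum _ fun x _ ↦ integrable_exp_mul_gaussianReal _, Zcw,
    Real.exp_log (by positivity)]
  refine Finset.sum_congr rfl fun x _ ↦ ?_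
  rw [integral_exp_mul_gaussianReal, Real.coe_toNNReal _ (by positivity), mag]
  congr 1
  rcases eq_or_ne (n : ℝ) 0 with hn | hn
  · simp [hn]
  · field_simp

lemma exp_Zcw_eq_setIntegral (hn : n ≠ 0) (hθ : 0 < θ) :
    Real.exp (Zcw n θ) =
      2 * (√(2 * Real.pi * θ))⁻¹ * (√n * ∫ s in Ioi 0, Real.exp (n * cwPhase θ s)) := by
  have hn_pos : (0 : ℝ) < n := by positivity
  have hdensity (s : ℝ) : gaussianPDFReal 0 (θ / n).toNNReal s • (2 * Real.cosh s) ^ n =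
      (√(2 * Real.pi * θ))⁻¹ * √n * Real.exp (n * cwPhase θ |s|) := by
    have hpow : (2 * Real.cosh s) ^ n = Real.exp (n * Real.log (2 * Real.cosh s)) := by
      rw [← Real.log_pow, Real.exp_log (by positivity)]
    rw [gaussianPDFReal, Real.coe_toNNReal _ (by positivity), smul_eq_mul, hpow, mul_assoc,
      ← Real.exp_add, ← mul_div_assoc, Real.sqrt_div' _ hn_pos.le, inv_div, cwPhase, sq_abs,
      Real.cosh_abs, div_eq_inv_mul]
    congr 2
    field_simp
    ring
  rw [exp_Zcw_eq_integral_gaussianReal n hθ.le,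
    integral_gaussianReal_eq_integral_smul (by simpa using div_pos hθ hn_pos)]
  simp_rw [hdensity]
  rw [integral_const_mul, integral_comp_abs (f := fun s ↦ Real.exp (n * cwPhase θ s))]
  ring

end HubbardStratonovich

section Asymptotics

variable {n : ℕ} {θ m h : ℝ}

/-- The coefficient `b` for which moving the inverse temperature from `θ` to `θ + h / r` adds
`b * r * s ^ 2` to `r ^ 2 * cwPhase θ s`. -/
noncomputable def cwTilt (θ h r : ℝ) : ℝ :=
  h / (2 * θ * (θ + h / r))

lemma sq_mul_cwPhase_add_div {r : ℝ} (hθ : θ ≠ 0) (hr : r ≠ 0) (hθ' : θ + h / r ≠ 0) (s₀ s : ℝ) :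
    r ^ 2 * cwPhase (θ + h / r) s =
      r ^ 2 * cwPhase θ s₀ + cwTilt θ h r * r * s₀ ^ 2 +
        laplaceExponent (cwPhase θ) (· ^ 2) s₀ (cwTilt θ h r) r s := by
  have hnum : r * θ + h ≠ 0 := by
    rw [add_div_eq_mul_add_div θ h hr, mul_comm] at hθ'
    exact (div_ne_zero_iff.1 hθ').1
  have hinv : r ^ 2 * (s ^ 2 / (2 * (θ + h / r))) =
      r ^ 2 * (s ^ 2 / (2 * θ)) - cwTilt θ h r * r * s ^ 2 := by
    rw [cwTilt]
    field_simp
    ring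
  simp only [laplaceExponent, cwPhase, mul_sub, hinv]
  ring

lemma Zcw_add_div_sqrt (hn : n ≠ 0) (hθ : θ ≠ 0) (hθ' : 0 < θ + h / √n) (s₀ : ℝ) :
    Zcw n (θ + h / √n) =
      n * cwPhase θ s₀ + cwTilt θ h √n * √n * s₀ ^ 2 +
        Real.log (2 * (√(2 * Real.pi * (θ + h / √n)))⁻¹ * (√n * ∫ s in Ioi 0,
          Real.exp (laplaceExponent (cwPhase θ) (· ^ 2) s₀ (cwTilt θ h √n) √n s))) := by
  have hsqrt : √(n : ℝ) ≠ 0 := by positivity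
  have hexp (s : ℝ) := sq_mul_cwPhase_add_div hθ hsqrt hθ'.ne' s₀ s
  rw [Real.sq_sqrt n.cast_nonneg] at hexp
  have hZ := exp_Zcw_eq_setIntegral hn hθ'
  simp_rw [hexp, Real.exp_add _ (laplaceExponent _ _ _ _ _ _)] at hZ
  rw [integral_const_mul, mul_left_comm √(n : ℝ), mul_left_comm] at hZ
  have hpos := pos_of_mul_pos_right (hZ ▸ Real.exp_pos _) (Real.exp_pos _).le
  rw [← Real.log_exp (Zcw n _), hZ, Real.log_mul (Real.exp_ne_zero _) hpos.ne', Real.log_exp]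

lemma abs_sq_sub_sq_le {a : ℝ} (ha : 0 ≤ a) (s : ℝ) :
    |s ^ 2 - a ^ 2| ≤ (1 + 2 * a) * (|s - a| + (s - a) ^ 2) := by
  have hsum : |s + a| ≤ |s - a| + 2 * a :=
    calc |s + a| = |s - a + 2 * a| := by ring_nf
      _ ≤ |s - a| + |2 * a| := abs_add_le _ _
      _ = |s - a| + 2 * a := by rw [abs_of_nonneg (mul_nonneg zero_le_two ha)]
  have habs : 0 ≤ |s - a| := abs_nonneg _
  calc |s ^ 2 - a ^ 2| = |s + a| * |s - a| := by rw [sq_sub_sq, abs_mul]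
    _ ≤ (|s - a| + 2 * a) * |s - a| := by gcongr
    _ ≤ (1 + 2 * a) * (|s - a| + |s - a| ^ 2) := by nlinarith
    _ = (1 + 2 * a) * (|s - a| + (s - a) ^ 2) := by rw [sq_abs]

lemma tendsto_sqrt_natCast_atTop : Tendsto (fun n : ℕ ↦ √(n : ℝ)) atTop atTop :=
  Real.tendsto_sqrt_atTop.comp tendsto_natCast_atTop_atTop

lemma tendsto_add_div_sqrt (θ h : ℝ) : Tendsto (fun n : ℕ ↦ θ + h / √n) atTop (𝓝 θ) := by
  simpa using (tendsto_sqrt_natCast_atTop.const_div_atTop h).const_add θ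

lemma tendsto_cwTilt (hθ : θ ≠ 0) (h : ℝ) :
    Tendsto (fun n : ℕ ↦ cwTilt θ h √n) atTop (𝓝 (h / (2 * θ ^ 2))) := by
  have hden := (tendsto_add_div_sqrt θ h).const_mul (2 * θ)
  rw [mul_assoc, ← sq] at hden
  exact tendsto_const_nhds.div hden (by positivity)

lemma tendsto_cwTilt_mul_sqrt_sub (hθ : θ ≠ 0) (h m : ℝ) :
    Tendsto (fun n : ℕ ↦ cwTilt θ h √n * √n * (θ * m) ^ 2 - 1 / 2 * √n * h * m ^ 2) atTop
      (𝓝 (-(h ^ 2 * m ^ 2 / (2 * θ)))) := by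
  have hlim : Tendsto (fun n : ℕ ↦ h ^ 2 * m ^ 2 / (2 * (θ + h / √n))) atTop
      (𝓝 (h ^ 2 * m ^ 2 / (2 * θ))) :=
    tendsto_const_nhds.div ((tendsto_add_div_sqrt θ h).const_mul 2) (by positivity)
  refine hlim.neg.congr' ?_
  filter_upwards [eventually_ne_atTop 0, (tendsto_add_div_sqrt θ h).eventually_ne hθ]
    with n hn hθ'
  have hsqrt : √(n : ℝ) ≠ 0 := by positivity
  have hnum : θ * √n + h ≠ 0 := by
    rw [add_div_eq_mul_add_div θ h hsqrt] at hθ'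
    exact (div_ne_zero_iff.1 hθ').1
  rw [cwTilt]
  field_simp
  ring

lemma tendsto_sqrt_mul_setIntegral_cwPhase (hθ : 0 < θ) (hm : 0 < m)
    (hfix : Real.tanh (θ * m) = m) (h : ℝ) :
    Tendsto (fun n : ℕ ↦ √n * ∫ s in Ioi 0,
        Real.exp (laplaceExponent (cwPhase θ) (· ^ 2) (θ * m) (cwTilt θ h √n) √n s)) atTop
      (𝓝 (√(2 * Real.pi * θ / (1 - θ * (1 - m ^ 2))) *
        Real.exp (h ^ 2 * m ^ 2 / (2 * θ * (1 - θ * (1 - m ^ 2)))))) := by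
  have hs₀ : 0 < θ * m := mul_pos hθ hm
  have hD : 0 < 1 - θ * (1 - m ^ 2) := sub_pos.2 (mul_one_sub_sq_lt_one hθ hm hfix)
  obtain ⟨κ, hκ, hphase_le⟩ := exists_cwPhase_sub_le hθ hm hfix
  have hlaplace := tendsto_mul_setIntegral_exp_laplaceExponent tendsto_sqrt_natCast_atTop
    (tendsto_cwTilt hθ.ne' h) measurableSet_Ioi (Ioi_mem_nhds hs₀) (measurable_cwPhase θ)
    (by fun_prop) hκ (fun s hs ↦ hphase_le s (Ioi_subset_Ici_self hs))
    (tendsto_cwPhase_sub_div_sq hθ.ne' hfix) (fun s _ ↦ abs_sq_sub_sq_le hs₀.le s)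
    (hasDerivAt_pow 2 (θ * m))
  rw [integral_exp_neg_mul_sq_add_mul (by positivity)] at hlaplace
  convert hlaplace using 3
  · congr 1
    field_simp
  · congr 1
    field_simp
    ring

theorem tendsto_Zcw_add_div_sqrt_sub (hθ : 0 < θ) (hm : 0 < m) (hfix : Real.tanh (θ * m) = m)
    (h : ℝ) :
    Tendsto (fun n : ℕ ↦
        Zcw n (θ + h / √n) - n * cwPhase θ (θ * m) - 1 / 2 * √n * h * m ^ 2) atTop
      (𝓝 (Real.log (2 / √(1 - θ * (1 - m ^ 2))) +
        m ^ 2 * ((1 - m ^ 2) / (1 - θ * (1 - m ^ 2))) * h ^ 2 / 2)) := by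
  have hD : 0 < 1 - θ * (1 - m ^ 2) := sub_pos.2 (mul_one_sub_sq_lt_one hθ hm hfix)
  have hprefactor : Tendsto (fun n : ℕ ↦ 2 * (√(2 * Real.pi * (θ + h / √n)))⁻¹) atTop
      (𝓝 (2 * (√(2 * Real.pi * θ))⁻¹)) :=
    (((tendsto_add_div_sqrt θ h).const_mul _).sqrt.inv₀ (by positivity)).const_mul 2
  have hlog := (hprefactor.mul
    (tendsto_sqrt_mul_setIntegral_cwPhase hθ hm hfix h)).log (by positivity)
  have hlim := (tendsto_cwTilt_mul_sqrt_sub hθ.ne' h m).add hlog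
  refine (hlim.congr' ?_).trans_eq ?_
  · filter_upwards [eventually_ne_atTop 0, (tendsto_add_div_sqrt θ h).eventually_const_lt hθ]
      with n hn hθ'
    rw [Zcw_add_div_sqrt hn hθ.ne' hθ' (θ * m)]
    ring
  · rw [← mul_assoc, Real.log_mul (by positivity) (Real.exp_ne_zero _), Real.log_exp,
      Real.sqrt_div (by positivity)]
    have hconst : 2 * (√(2 * Real.pi * θ))⁻¹ *
        (√(2 * Real.pi * θ) / √(1 - θ * (1 - m ^ 2))) = 2 / √(1 - θ * (1 - m ^ 2)) := by
      field_simp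
    rw [hconst]
    congr 1
    field_simp
    ring

end Asymptotics

theorem stmt11 (θ₀ h : ℝ) (hθ : 1 < θ₀) (m : ℝ → ℝ)
    (hm : ∀ θ : ℝ, 1 < θ → 0 < m θ ∧ Real.tanh (θ * m θ) = m θ) :
    Tendsto (fun n : ℕ =>
        Zcw n (θ₀ + h / Real.sqrt (n : ℝ)) - Zcw n θ₀ -
          1 / 2 * Real.sqrt (n : ℝ) * h * m θ₀ ^ 2)
      atTop
      (nhds (m θ₀ ^ 2 * ((1 - m θ₀ ^ 2) / (1 - θ₀ * (1 - m θ₀ ^ 2))) * h ^ 2 / 2)) := by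
  obtain ⟨hm_pos, hfix⟩ := hm θ₀ hθ
  have hθ_pos : 0 < θ₀ := zero_lt_one.trans hθ
  have hperturbed := tendsto_Zcw_add_div_sqrt_sub hθ_pos hm_pos hfix h
  have hbase := tendsto_Zcw_add_div_sqrt_sub hθ_pos hm_pos hfix 0
  refine ((hperturbed.sub hbase).congr fun n ↦ ?_).trans_eq ?_
  · rw [zero_div, add_zero]
    ring
  · congr 1
    ring
end

section
/- Fix h ∈ ℝ, set θ_n := 1 + h/√n, and let X ∈ {−1,1}ⁿ have the Curie–Weiss distribution P_{θ_n,CW}. Then n^{1/4}·X̄ converges in distribution to the law H_h with density p_h(u) = exp(−u⁴/12 + hu²/2 − F(h)). -/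
open MeasureTheory Filter

/-- Unnormalized Curie–Weiss measure on `{-1,1}ⁿ` (encoded by `Fin n → Bool`). -/
noncomputable def cwUnnorm (n : ℕ) (θ : ℝ) : Measure (Fin n → Bool) :=
  ∑ x : Fin n → Bool,
    ENNReal.ofReal (Real.exp ((n : ℝ) * θ * mag n x ^ 2 / 2)) • Measure.dirac x

/-- The Curie–Weiss model `P_{θ,CW}`. -/
noncomputable def cwMeasure (n : ℕ) (θ : ℝ) : Measure (Fin n → Bool) :=
  (cwUnnorm n θ Set.univ)⁻¹ • cwUnnorm n θ

/-- `F(h) = log ∫ exp(-u⁴/12 + h u²/2) du`. -/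
noncomputable def Fcrit (h : ℝ) : ℝ :=
  Real.log (∫ u : ℝ, Real.exp (-(u ^ 4) / 12 + h * u ^ 2 / 2))

/-- The probability distribution `H_h` with density `exp(-u⁴/12 + h u²/2 - F(h))`. -/
noncomputable def Hmeasure (h : ℝ) : Measure ℝ :=
  MeasureTheory.volume.withDensity fun u =>
    ENNReal.ofReal (Real.exp (-(u ^ 4) / 12 + h * u ^ 2 / 2 - Fcrit h))

/-!
At criticality `θ ≈ 1` the quadratic part of the Curie–Weiss energy cancels the entropy to second
order, and the fluctuations are governed by the quartic term. To see this without Stirling-type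
estimates, write `b = n^(1/4)` and add to `b X̄` an independent centred Gaussian of variance
`1 / (b² θ)`. Completing the square (the Hubbard–Stratonovich transform) decouples the spins, so the
sum has density proportional to `exp (b⁴ log cosh (θ u / b) - b² θ u² / 2)`. Since
`log cosh x = x² / 2 - x⁴ / 12 + o(x⁴)`, the exponent converges to `-u⁴ / 12 + h u² / 2` as soon as
`√n (θ - 1) → h`, and `log cosh x ≤ x² / 2 - x⁴ / (12 (1 + x²))` bounds it by `C - u²` with the
same `C` for all large `n`. Dominated convergence gives the limit of the characteristic functions.
The variance of the added Gaussian tends to `0`, so its characteristic function can be divided out,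
and Lévy's continuity theorem concludes.
-/

section LogCosh

open Real

lemma le_of_hasDerivAt_le {f g f' g' : ℝ → ℝ} {a x : ℝ} (hf : ∀ y ≥ a, HasDerivAt f (f' y) y)
    (hg : ∀ y ≥ a, HasDerivAt g (g' y) y) (ha : f a ≤ g a) (hle : ∀ y ≥ a, f' y ≤ g' y)
    (hx : a ≤ x) : f x ≤ g x :=
  image_le_of_deriv_right_le_deriv_boundary
    (fun y hy => (hf y hy.1).continuousAt.continuousWithinAt)
    (fun y hy => (hf y hy.1).hasDerivWithinAt) ha
    (fun y hy => (hg y hy.1).continuousAt.continuousWithinAt)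
    (fun y hy => (hg y hy.1).hasDerivWithinAt) (fun y hy => hle y hy.1) ⟨hx, le_rfl⟩

lemma hasDerivAt_tanh_s14 (x : ℝ) : HasDerivAt tanh (1 - tanh x ^ 2) x := by
  have hcosh : cosh x ≠ 0 := (cosh_pos x).ne'
  have hquot := (hasDerivAt_sinh x).div (hasDerivAt_cosh x) hcosh
  rw [show tanh = sinh / cosh from funext tanh_eq_sinh_div_cosh]
  refine hquot.congr_deriv ?_
  rw [Pi.div_apply]
  field_simp

lemma hasDerivAt_log_cosh (x : ℝ) : HasDerivAt (fun y => log (cosh y)) (tanh x) x := by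
  rw [tanh_eq_sinh_div_cosh]
  exact (hasDerivAt_cosh x).log (cosh_pos x).ne'

lemma sq_div_one_add_sq_le_tanh_sq (x : ℝ) : x ^ 2 / (1 + x ^ 2) ≤ tanh x ^ 2 := by
  have hsinh : x ^ 2 ≤ sinh x ^ 2 := by
    rw [sq_le_sq]
    rcases le_total 0 x with hx | hx
    · rw [abs_of_nonneg hx, abs_of_nonneg (sinh_nonneg_iff.2 hx)]
      exact self_le_sinh_iff.2 hx
    · rw [abs_of_nonpos hx, abs_of_nonpos (sinh_nonpos_iff.2 hx)]
      exact neg_le_neg (sinh_le_self_iff.2 hx)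
  rw [tanh_eq_sinh_div_cosh, div_pow, cosh_sq', div_le_div_iff₀ (by positivity) (by positivity)]
  linarith

lemma tanh_le_sub_cube_div {x : ℝ} (hx : 0 ≤ x) :
    tanh x ≤ x - x ^ 3 / (3 * (1 + x ^ 2)) := by
  refine le_of_hasDerivAt_le (g := fun y => y - y ^ 3 / (3 * (1 + y ^ 2)))
    (fun y _ => hasDerivAt_tanh_s14 y) (fun y _ => (hasDerivAt_id y).sub
      ((hasDerivAt_pow 3 y).div (((hasDerivAt_pow 2 y).const_add 1).const_mul 3)
        (by positivity))) (by simp) (fun y _ => ?_) hx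
  have hquot : (((3 : ℕ) * y ^ (3 - 1) * (3 * (1 + y ^ 2)) - y ^ 3 * (3 * ((2 : ℕ) * y ^ (2 - 1))))
      / (3 * (1 + y ^ 2)) ^ 2) ≤ y ^ 2 / (1 + y ^ 2) := by
    rw [div_le_div_iff₀ (by positivity) (by positivity)]
    norm_num
    nlinarith [pow_nonneg (sq_nonneg y) 2, pow_nonneg (sq_nonneg y) 3]
  linarith [sq_div_one_add_sq_le_tanh_sq y]

lemma tanh_nonneg {x : ℝ} (hx : 0 ≤ x) : 0 ≤ tanh x := by
  rw [tanh_eq_sinh_div_cosh]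
  exact div_nonneg (sinh_nonneg_iff.2 hx) (cosh_pos x).le

lemma sub_cube_div_le_tanh {x : ℝ} (hx : 0 ≤ x) : x - x ^ 3 / 3 ≤ tanh x := by
  refine le_of_hasDerivAt_le (f := fun y => y - y ^ 3 / 3)
    (fun y _ => (hasDerivAt_id y).sub ((hasDerivAt_pow 3 y).div_const 3))
    (fun y _ => hasDerivAt_tanh_s14 y) (by simp) (fun y hy => ?_) hx
  have htanh_le : tanh y ≤ y :=
    (tanh_le_sub_cube_div hy).trans (sub_le_self _ (by have : 0 ≤ y := hy; positivity))
  have hsq : tanh y ^ 2 ≤ y ^ 2 := pow_le_pow_left₀ (tanh_nonneg hy) htanh_le 2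
  norm_num
  linarith

lemma le_log_cosh (x : ℝ) : x ^ 2 / 2 - x ^ 4 / 12 ≤ log (cosh x) := by
  suffices h : ∀ y ≥ 0, y ^ 2 / 2 - y ^ 4 / 12 ≤ log (cosh y) by
    simpa only [sq_abs, Even.pow_abs (by decide : Even 4), cosh_abs] using h |x| (abs_nonneg x)
  intro y hy
  refine le_of_hasDerivAt_le (f := fun y => y ^ 2 / 2 - y ^ 4 / 12)
    (fun z _ => ((hasDerivAt_pow 2 z).div_const 2).sub ((hasDerivAt_pow 4 z).div_const 12))
    (fun z _ => hasDerivAt_log_cosh z) (by simp) (fun z hz => ?_) hy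
  norm_num
  linarith [sub_cube_div_le_tanh hz]

lemma log_cosh_le (x : ℝ) :
    log (cosh x) ≤ x ^ 2 / 2 - x ^ 4 / (12 * (1 + x ^ 2)) := by
  suffices h : ∀ y ≥ 0, log (cosh y) ≤ y ^ 2 / 2 - y ^ 4 / (12 * (1 + y ^ 2)) by
    simpa only [sq_abs, Even.pow_abs (by decide : Even 4), cosh_abs] using h |x| (abs_nonneg x)
  intro y hy
  refine le_of_hasDerivAt_le (g := fun y => y ^ 2 / 2 - y ^ 4 / (12 * (1 + y ^ 2)))
    (fun z _ => hasDerivAt_log_cosh z) (fun z _ => ((hasDerivAt_pow 2 z).div_const 2).sub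
      ((hasDerivAt_pow 4 z).div (((hasDerivAt_pow 2 z).const_add 1).const_mul 12)
        (by positivity))) (by simp) (fun z hz => ?_) hy
  have hquot : (((4 : ℕ) * z ^ (4 - 1) * (12 * (1 + z ^ 2)) -
      z ^ 4 * (12 * ((2 : ℕ) * z ^ (2 - 1)))) / (12 * (1 + z ^ 2)) ^ 2)
      ≤ z ^ 3 / (3 * (1 + z ^ 2)) := by
    have hz' : 0 ≤ z := hz
    rw [div_le_div_iff₀ (by positivity) (by positivity)]
    norm_num
    nlinarith [pow_nonneg hz' 5, pow_nonneg hz' 7]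
  have hlin : ((2 : ℕ) * z ^ (2 - 1)) / 2 = z := by norm_num
  linarith [tanh_le_sub_cube_div hz, hlin]

end LogCosh

section Tilted

open Real ProbabilityTheory
open scoped ENNReal NNReal Topology

variable {α : Type*} {mα : MeasurableSpace α} {μ : Measure α}

lemma tilted_add_const (μ : Measure α) (f : α → ℝ) (c : ℝ) :
    μ.tilted (fun x => f x + c) = μ.tilted f := by
  simp only [Measure.tilted, exp_add, integral_mul_const, mul_div_mul_right _ _ (exp_pos c).ne']

lemma tilted_eq_inv_smul_withDensity {f : α → ℝ} (hf : Integrable (fun x => exp (f x)) μ) :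
    μ.tilted f = (μ.withDensity (fun x => ENNReal.ofReal (exp (f x))) Set.univ)⁻¹ •
      μ.withDensity fun x => ENNReal.ofReal (exp (f x)) := by
  rcases eq_zero_or_neZero μ with rfl | hμ
  · simp
  have hZ : 0 < ∫ x, exp (f x) ∂μ := integral_exp_pos hf
  rw [withDensity_apply _ MeasurableSet.univ, setLIntegral_univ,
    ← ofReal_integral_eq_lintegral_ofReal hf (ae_of_all _ fun x => (exp_pos _).le),
    ← withDensity_smul' _ _ (by simpa using hZ), Measure.tilted]
  congr 1 with x
  rw [Pi.smul_apply, smul_eq_mul, ENNReal.ofReal_div_of_pos hZ, ENNReal.div_eq_inv_mul]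

lemma eq_tilted_of_eq_withDensity {ν : Measure α} [IsProbabilityMeasure ν] {f : α → ℝ} {c : ℝ}
    (hf : AEMeasurable f μ) (hc : 0 ≤ c)
    (hν : ν = μ.withDensity fun x => ENNReal.ofReal (c * exp (f x))) : ν = μ.tilted f := by
  have hmass : c * ∫ x, exp (f x) ∂μ = 1 := by
    rw [← integral_const_mul, integral_eq_lintegral_of_nonneg_ae
      (ae_of_all _ fun x => by positivity) (by fun_prop), ← setLIntegral_univ,
      ← withDensity_apply _ MeasurableSet.univ, ← hν, measure_univ, ENNReal.toReal_one]
  simp only [hν, Measure.tilted, div_eq_inv_mul, ← eq_inv_of_mul_eq_one_left hmass]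

lemma tendsto_integral_tilted {ι E : Type*} [NormedAddCommGroup E] [NormedSpace ℝ E] [NeZero μ]
    {l : Filter ι} [l.IsCountablyGenerated] {F : ι → α → ℝ} {f bound : α → ℝ} {g : α → E} {C : ℝ}
    (hF : ∀ᶠ i in l, AEMeasurable (F i) μ) (hbound : Integrable bound μ)
    (hF_le : ∀ᶠ i in l, ∀ᵐ x ∂μ, exp (F i x) ≤ bound x)
    (hf : Integrable (fun x => exp (f x)) μ)
    (hlim : ∀ᵐ x ∂μ, Tendsto (fun i => F i x) l (𝓝 (f x)))
    (hg : AEStronglyMeasurable g μ) (hgC : ∀ x, ‖g x‖ ≤ C) :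
    Tendsto (fun i => ∫ x, g x ∂μ.tilted (F i)) l (𝓝 (∫ x, g x ∂μ.tilted f)) := by
  have hexp : ∀ᵐ x ∂μ, Tendsto (fun i => exp (F i x)) l (𝓝 (exp (f x))) :=
    hlim.mono fun x hx => (continuous_exp.tendsto _).comp hx
  have hZ : Tendsto (fun i => ∫ x, exp (F i x) ∂μ) l (𝓝 (∫ x, exp (f x) ∂μ)) := by
    refine tendsto_integral_filter_of_dominated_convergence bound
      (hF.mono fun i hi => by fun_prop) (hF_le.mono fun i hi => hi.mono fun x hx => ?_)
      hbound hexp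
    rwa [norm_of_nonneg (exp_pos _).le]
  have hnum : Tendsto (fun i => ∫ x, exp (F i x) • g x ∂μ) l (𝓝 (∫ x, exp (f x) • g x ∂μ)) := by
    refine tendsto_integral_filter_of_dominated_convergence (fun x => bound x * C)
      (hF.mono fun i hi => AEStronglyMeasurable.smul (by fun_prop) hg)
      (hF_le.mono fun i hi => hi.mono fun x hx => ?_) (hbound.mul_const C)
      (hexp.mono fun x hx => hx.smul_const _)
    rw [norm_smul, norm_of_nonneg (exp_pos _).le]
    exact mul_le_mul hx (hgC x) (norm_nonneg _) ((exp_pos _).le.trans hx)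
  simp only [integral_tilted, div_eq_inv_mul, mul_smul, integral_smul]
  exact (hZ.inv₀ (integral_exp_pos hf).ne').smul hnum

lemma tendsto_charFun_tilted {ι : Type*} {μ : Measure ℝ} [NeZero μ] {l : Filter ι}
    [l.IsCountablyGenerated] {F : ι → ℝ → ℝ} {f bound : ℝ → ℝ}
    (hF : ∀ᶠ i in l, AEMeasurable (F i) μ) (hbound : Integrable bound μ)
    (hF_le : ∀ᶠ i in l, ∀ᵐ x ∂μ, exp (F i x) ≤ bound x)
    (hf : Integrable (fun x => exp (f x)) μ)
    (hlim : ∀ᵐ x ∂μ, Tendsto (fun i => F i x) l (𝓝 (f x))) (t : ℝ) :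
    Tendsto (fun i => charFun (μ.tilted (F i)) t) l (𝓝 (charFun (μ.tilted f) t)) := by
  simp only [charFun_apply_real]
  refine tendsto_integral_tilted (C := 1) hF hbound hF_le hf hlim (by fun_prop) fun x => ?_
  rw [← Complex.ofReal_mul, Complex.norm_exp_ofReal_mul_I]

end Tilted

section HubbardStratonovich

open Real ProbabilityTheory
open scoped ENNReal NNReal Topology

lemma conv_gaussianReal_eq_withDensity (ν : Measure ℝ) [SFinite ν] {v : ℝ≥0} (hv : v ≠ 0) :
    ν ∗ gaussianReal 0 v = volume.withDensity fun u => ∫⁻ x, gaussianPDF x v u ∂ν := by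
  have hpdf : Measurable fun p : ℝ × ℝ => gaussianPDF p.1 v p.2 :=
    measurable_uncurry_gaussianPDF.comp (f := fun p : ℝ × ℝ => (p.1, v, p.2)) (by fun_prop)
  refine Measure.ext_of_lintegral _ fun g hg => ?_
  calc ∫⁻ z, g z ∂(ν ∗ gaussianReal 0 v)
      = ∫⁻ x, ∫⁻ y, g (x + y) ∂gaussianReal 0 v ∂ν := Measure.lintegral_conv hg
    _ = ∫⁻ x, ∫⁻ u, gaussianPDF x v u * g u ∂volume ∂ν := by
        refine lintegral_congr fun x => ?_
        rw [← lintegral_map hg (measurable_const_add x), gaussianReal_map_const_add, zero_add,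
          gaussianReal_of_var_ne_zero x hv,
          lintegral_withDensity_eq_lintegral_mul _ (measurable_gaussianPDF x v) hg]
        rfl
    _ = ∫⁻ u, ∫⁻ x, gaussianPDF x v u * g u ∂ν :=
        lintegral_lintegral_swap (by fun_prop)
    _ = ∫⁻ u, g u ∂volume.withDensity fun u => ∫⁻ x, gaussianPDF x v u ∂ν := by
        rw [lintegral_withDensity_eq_lintegral_mul _ hpdf.lintegral_prod_left' hg]
        refine lintegral_congr fun u => ?_
        rw [Pi.mul_apply, lintegral_mul_const _ (by fun_prop)]

variable {Ω : Type*} {mΩ : MeasurableSpace Ω} {μ : Measure Ω} {S : Ω → ℝ} {v : ℝ≥0}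

lemma integrable_exp_mul_of_integrable_exp_sq (hS : AEMeasurable S μ) (hv : v ≠ 0)
    (hint : Integrable (fun ω => exp (S ω ^ 2 / (2 * v))) μ) (t : ℝ) :
    Integrable (fun ω => exp (t * S ω)) μ := by
  refine (hint.const_mul (exp (v * t ^ 2 / 2))).mono' (by fun_prop) (ae_of_all _ fun ω => ?_)
  rw [norm_of_nonneg (exp_pos _).le, ← exp_add, exp_le_exp]
  have hsq : v * t ^ 2 / 2 + S ω ^ 2 / (2 * v) - t * S ω = (v * t - S ω) ^ 2 / (2 * v) := by
    field_simp
    ring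
  have : 0 ≤ (v * t - S ω) ^ 2 / (2 * v) := by positivity
  linarith

lemma lintegral_gaussianPDF_map_tilted [NeZero μ] (hS : AEMeasurable S μ) (hv : v ≠ 0)
    (hint : Integrable (fun ω => exp (S ω ^ 2 / (2 * v))) μ) (u : ℝ) :
    ∫⁻ x, gaussianPDF x v u ∂(μ.tilted fun ω => S ω ^ 2 / (2 * v)).map S =
      ENNReal.ofReal ((√(2 * π * v))⁻¹ / (∫ ω, exp (S ω ^ 2 / (2 * v)) ∂μ) *
        exp (cgf S μ (u / v) - u ^ 2 / (2 * v))) := by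
  have hmgf := integrable_exp_mul_of_integrable_exp_sq hS hv hint (u / v)
  set Z := ∫ ω, exp (S ω ^ 2 / (2 * v)) ∂μ
  have hZ : 0 < Z := integral_exp_pos hint
  have hpdf : Measurable fun x => gaussianPDF x v u :=
    measurable_uncurry_gaussianPDF.comp (f := fun x : ℝ => (x, v, u)) (by fun_prop)
  have hsquare (ω : Ω) : exp (S ω ^ 2 / (2 * v)) / Z * gaussianPDFReal (S ω) v u =
      (√(2 * π * v))⁻¹ / Z * exp (-(u ^ 2 / (2 * v))) * exp (u / v * S ω) := by
    have hexp : exp (S ω ^ 2 / (2 * v)) * exp (-(u - S ω) ^ 2 / (2 * v)) =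
        exp (-(u ^ 2 / (2 * v))) * exp (u / v * S ω) := by
      rw [← exp_add, ← exp_add]
      congr 1
      field_simp
      ring
    rw [gaussianPDFReal_def]
    linear_combination (√(2 * π * v))⁻¹ / Z * hexp
  have hdensity (ω : Ω) : ENNReal.ofReal (exp (S ω ^ 2 / (2 * v)) / Z) * gaussianPDF (S ω) v u =
      ENNReal.ofReal ((√(2 * π * v))⁻¹ / Z * exp (-(u ^ 2 / (2 * v))) * exp (u / v * S ω)) := by
    rw [gaussianPDF, ← ENNReal.ofReal_mul (by positivity), hsquare]
  rw [lintegral_map' hpdf.aemeasurable (hS.mono_ac (tilted_absolutelyContinuous _ _)),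
    lintegral_tilted, lintegral_congr hdensity,
    ← ofReal_integral_eq_lintegral_ofReal (hmgf.const_mul _)
    (ae_of_all _ fun ω => by positivity), integral_const_mul, ← mgf, ← exp_cgf hmgf,
    mul_assoc, ← exp_add, neg_add_eq_sub]

theorem tilted_sq_map_conv_gaussianReal [NeZero μ] (hS : AEMeasurable S μ) (hv : v ≠ 0)
    (hint : Integrable (fun ω => exp (S ω ^ 2 / (2 * v))) μ) :
    (μ.tilted fun ω => S ω ^ 2 / (2 * v)).map S ∗ gaussianReal 0 v =
      volume.tilted fun u => cgf S μ (u / v) - u ^ 2 / (2 * v) := by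
  have := isProbabilityMeasure_tilted hint
  have := Measure.isProbabilityMeasure_map (μ := μ.tilted fun ω => S ω ^ 2 / (2 * v))
    (hS.mono_ac (tilted_absolutelyContinuous _ _))
  have hconv := conv_gaussianReal_eq_withDensity
    ((μ.tilted fun ω => S ω ^ 2 / (2 * v)).map S) hv
  simp only [lintegral_gaussianPDF_map_tilted hS hv hint] at hconv
  have hcgf : Measurable (cgf S μ) := measurable_log.comp (continuous_mgf
    (integrable_exp_mul_of_integrable_exp_sq hS hv hint)).measurable
  exact eq_tilted_of_eq_withDensity (by fun_prop) (by positivity) hconv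

lemma tendsto_charFun_of_tendsto_charFun_conv_gaussianReal {ι : Type*} {l : Filter ι}
    {ν : ι → Measure ℝ} [∀ i, IsFiniteMeasure (ν i)] {v : ι → ℝ≥0} (hv : Tendsto v l (𝓝 0))
    {t : ℝ} {z : ℂ} (h : Tendsto (fun i => charFun (ν i ∗ gaussianReal 0 (v i)) t) l (𝓝 z)) :
    Tendsto (fun i => charFun (ν i) t) l (𝓝 z) := by
  have hgauss : Tendsto (fun i => charFun (gaussianReal 0 (v i)) t) l (𝓝 1) := by
    have hcont : Continuous fun w : ℝ≥0 => charFun (gaussianReal 0 w) t := by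
      simp only [charFun_gaussianReal]
      fun_prop
    simpa [charFun_gaussianReal, Function.comp_def] using (hcont.tendsto 0).comp hv
  have hdiv := h.div hgauss one_ne_zero
  rw [div_one] at hdiv
  refine hdiv.congr fun i => ?_
  rw [Pi.div_apply, charFun_conv, charFun_gaussianReal,
    mul_div_cancel_right₀ _ (Complex.exp_ne_zero _)]

end HubbardStratonovich

section HubbardStratonovichExponent

open Real
open scoped Topology

/-- The exponent of the Hubbard–Stratonovich density of the Curie–Weiss model on `b ^ 4` spins at
inverse temperature `θ`: up to normalization, `exp (hsExponent b θ u)` is the density at `u` of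
`b X̄` plus an independent centred Gaussian of variance `1 / (b ^ 2 θ)`. -/
noncomputable def hsExponent (b θ u : ℝ) : ℝ :=
  b ^ 4 * log (cosh (θ * u / b)) - b ^ 2 * θ * u ^ 2 / 2

/-- The exponent `-u⁴/12 + h u²/2` of the density of `Hmeasure h`, without its normalizing
constant `Fcrit h`. -/
noncomputable def critExponent (h u : ℝ) : ℝ :=
  -(u ^ 4) / 12 + h * u ^ 2 / 2

lemma le_hsExponent {b : ℝ} (hb : b ≠ 0) (θ u : ℝ) :
    θ * (b ^ 2 * (θ - 1)) * u ^ 2 / 2 - θ ^ 4 * u ^ 4 / 12 ≤ hsExponent b θ u := by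
  have hlog := mul_le_mul_of_nonneg_left (le_log_cosh (θ * u / b)) (by positivity : 0 ≤ b ^ 4)
  have hexpand : b ^ 4 * ((θ * u / b) ^ 2 / 2 - (θ * u / b) ^ 4 / 12) =
      b ^ 2 * θ ^ 2 * u ^ 2 / 2 - θ ^ 4 * u ^ 4 / 12 := by
    field_simp
  rw [hsExponent]
  linarith

lemma hsExponent_le {b : ℝ} (hb : b ≠ 0) (θ u : ℝ) :
    hsExponent b θ u ≤ θ * (b ^ 2 * (θ - 1)) * u ^ 2 / 2 -
      θ ^ 4 * u ^ 4 / (12 * (1 + (θ * u / b) ^ 2)) := by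
  have hlog := mul_le_mul_of_nonneg_left (log_cosh_le (θ * u / b)) (by positivity : 0 ≤ b ^ 4)
  have hexpand : b ^ 4 * ((θ * u / b) ^ 2 / 2 - (θ * u / b) ^ 4 / (12 * (1 + (θ * u / b) ^ 2))) =
      b ^ 2 * θ ^ 2 * u ^ 2 / 2 - θ ^ 4 * u ^ 4 / (12 * (1 + (θ * u / b) ^ 2)) := by
    field_simp
  rw [hsExponent]
  linarith

lemma tendsto_hsExponent {ι : Type*} {l : Filter ι} {b θ : ι → ℝ} {h : ℝ}
    (hb : Tendsto b l atTop) (hθ : Tendsto (fun i => b i ^ 2 * (θ i - 1)) l (𝓝 h)) (u : ℝ) :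
    Tendsto (fun i => hsExponent (b i) (θ i) u) l (𝓝 (critExponent h u)) := by
  have hb_ne : ∀ᶠ i in l, b i ≠ 0 := hb.eventually_ne_atTop 0
  have hθ_one : Tendsto θ l (𝓝 1) := by
    have hsub : Tendsto (fun i => b i ^ 2 * (θ i - 1) / b i ^ 2 + 1) l (𝓝 1) := by
      simpa using (hθ.div_atTop ((tendsto_pow_atTop two_ne_zero).comp hb)).add_const 1
    refine hsub.congr' (hb_ne.mono fun i hi => ?_)
    rw [mul_div_cancel_left₀ _ (pow_ne_zero 2 hi), sub_add_cancel]
  have hquad : Tendsto (fun i => θ i * (b i ^ 2 * (θ i - 1)) * u ^ 2 / 2) l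
      (𝓝 (h * u ^ 2 / 2)) := by
    simpa using ((hθ_one.mul hθ).mul_const (u ^ 2)).div_const 2
  have hquart : Tendsto (fun i => θ i ^ 4 * u ^ 4) l (𝓝 (u ^ 4)) := by
    simpa using (hθ_one.pow 4).mul_const (u ^ 4)
  have hcorr : Tendsto (fun i => 12 * (1 + (θ i * u / b i) ^ 2)) l (𝓝 12) := by
    simpa using ((((hθ_one.mul_const u).div_atTop hb).pow 2).const_add 1).const_mul 12
  have hlim : critExponent h u = h * u ^ 2 / 2 - u ^ 4 / 12 := by
    rw [critExponent]
    ring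
  rw [hlim]
  exact tendsto_of_tendsto_of_tendsto_of_le_of_le' (hquad.sub (hquart.div_const 12))
    (hquad.sub (hquart.div hcorr (by norm_num)))
    (hb_ne.mono fun i hi => le_hsExponent hi (θ i) u)
    (hb_ne.mono fun i hi => hsExponent_le hi (θ i) u)

lemma two_mul_mul_sub_le_sq_div {s : ℝ} (hs : 0 < s) (m w : ℝ) :
    2 * m * w - m ^ 2 * s ≤ w ^ 2 / s := by
  rw [le_div_iff₀ hs]
  linarith [sq_nonneg (w - m * s)]

lemma hsExponent_le_sub_sq {b θ A : ℝ} (hb : b ≠ 0) (hA : |b ^ 2 * (θ - 1)| ≤ A)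
    (hbA : 768 * (A + 1) ≤ b ^ 2) (u : ℝ) : hsExponent b θ u ≤ 192 * (A + 1) ^ 2 - u ^ 2 := by
  have hA0 : 0 ≤ A := (abs_nonneg _).trans hA
  have hb2 : 0 < b ^ 2 := by positivity
  obtain ⟨hA_lower, hA_upper⟩ := abs_le.1 hA
  have hθ_lower : 1 / 2 ≤ θ := by nlinarith
  have hθ_upper : θ ≤ 2 := by nlinarith
  have hquad : θ * (b ^ 2 * (θ - 1)) * u ^ 2 / 2 ≤ A * u ^ 2 := by
    have : θ * (b ^ 2 * (θ - 1)) ≤ 2 * A := by nlinarith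
    nlinarith [sq_nonneg u]
  have hquart : u ^ 4 / (192 * (1 + 4 * u ^ 2 / b ^ 2)) ≤
      θ ^ 4 * u ^ 4 / (12 * (1 + (θ * u / b) ^ 2)) := by
    have hθ4 : (1 / 2) ^ 4 ≤ θ ^ 4 := pow_le_pow_left₀ (by norm_num) hθ_lower 4
    have hθ2 : (θ * u / b) ^ 2 ≤ 4 * u ^ 2 / b ^ 2 := by
      rw [div_pow, mul_pow]
      gcongr
      nlinarith
    calc u ^ 4 / (192 * (1 + 4 * u ^ 2 / b ^ 2))
        = (1 / 2) ^ 4 * u ^ 4 / (12 * (1 + 4 * u ^ 2 / b ^ 2)) := by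
          field_simp
          ring
      _ ≤ θ ^ 4 * u ^ 4 / (12 * (1 + (θ * u / b) ^ 2)) := by gcongr
  have hyoung := two_mul_mul_sub_le_sq_div
    (by positivity : 0 < 192 * (1 + 4 * u ^ 2 / b ^ 2)) (A + 1) (u ^ 2)
  rw [← pow_mul] at hyoung
  have hsmall : 192 * (A + 1) ^ 2 * (4 * u ^ 2 / b ^ 2) ≤ (A + 1) * u ^ 2 := by
    rw [mul_div_assoc', div_le_iff₀ hb2]
    nlinarith [mul_le_mul_of_nonneg_left hbA (by positivity : 0 ≤ (A + 1) * u ^ 2)]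
  linarith [hsExponent_le hb θ u]

lemma critExponent_le_sub_sq (h u : ℝ) : critExponent h u ≤ 3 * (h / 2 + 1) ^ 2 - u ^ 2 := by
  rw [critExponent]
  linarith [sq_nonneg (u ^ 2 - 6 * (h / 2 + 1))]

lemma integrable_exp_sub_sq (c : ℝ) : Integrable fun u : ℝ => exp (c - u ^ 2) := by
  simpa only [sub_eq_add_neg, exp_add, neg_one_mul] using
    (integrable_exp_neg_mul_sq one_pos).const_mul (exp c)

lemma integrable_exp_critExponent (h : ℝ) : Integrable fun u => exp (critExponent h u) := by
  refine (integrable_exp_sub_sq (3 * (h / 2 + 1) ^ 2)).mono'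
    (by unfold critExponent; fun_prop) (ae_of_all _ fun u => ?_)
  rw [norm_of_nonneg (exp_pos _).le]
  exact exp_le_exp.2 (critExponent_le_sub_sq h u)

end HubbardStratonovichExponent

section CurieWeiss

open Real ProbabilityTheory
open scoped Topology

lemma cwMeasure_eq_tilted (n : ℕ) (θ : ℝ) :
    cwMeasure n θ = Measure.count.tilted fun x => n * θ * mag n x ^ 2 / 2 := by
  rw [tilted_eq_inv_smul_withDensity Integrable.of_finite, count_withDensity,
    Measure.sum_fintype]
  rfl

instance isProbabilityMeasure_cwMeasure (n : ℕ) (θ : ℝ) :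
    IsProbabilityMeasure (cwMeasure n θ) := by
  rw [cwMeasure_eq_tilted]
  exact isProbabilityMeasure_tilted Integrable.of_finite

lemma Hmeasure_eq_tilted (h : ℝ) : Hmeasure h = volume.tilted (critExponent h) := by
  have hZ : exp (Fcrit h) = ∫ u, exp (critExponent h u) :=
    exp_log (integral_exp_pos (integrable_exp_critExponent h))
  rw [Measure.tilted, ← hZ]
  simp only [← exp_sub]
  rfl

instance isProbabilityMeasure_Hmeasure (h : ℝ) : IsProbabilityMeasure (Hmeasure h) := by
  rw [Hmeasure_eq_tilted]
  exact isProbabilityMeasure_tilted (integrable_exp_critExponent h)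

lemma cgf_sum_spin (n : ℕ) (t : ℝ) :
    cgf (fun x : Fin n → Bool => ∑ i, spin (x i)) Measure.count t =
      n * log (cosh t) + n * log 2 := by
  have hspin : ∑ s, exp (t * spin s) = 2 * cosh t := by
    simp only [spin, Fintype.sum_bool, cosh_eq, if_true, Bool.false_eq_true, if_false]
    ring_nf
  have hmgf : mgf (fun x : Fin n → Bool => ∑ i, spin (x i)) Measure.count t =
      (2 * cosh t) ^ n := by
    simp only [mgf, integral_count, Finset.mul_sum, exp_sum, ← hspin, Fintype.sum_pow]
  rw [cgf, hmgf, log_pow, log_mul two_ne_zero (cosh_pos t).ne']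
  ring

lemma cgf_const_mul_mag (n : ℕ) (b t : ℝ) :
    cgf (fun x => b * mag n x) Measure.count t =
      n * log (cosh (b / n * t)) + n * log 2 := by
  rw [← cgf_sum_spin, cgf, cgf, ← mgf_const_mul]
  simp only [mag, div_mul_eq_mul_div, mul_div_assoc]

lemma cwMeasure_map_conv_gaussianReal {n : ℕ} {b θ : ℝ} (hb : 0 < b) (hn : b ^ 4 = n)
    (hθ : 0 < θ) :
    (cwMeasure n θ).map (fun x => b * mag n x) ∗ gaussianReal 0 (b ^ 2 * θ)⁻¹.toNNReal =
      volume.tilted (hsExponent b θ) := by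
  have hvar : ((b ^ 2 * θ)⁻¹.toNNReal : ℝ) = (b ^ 2 * θ)⁻¹ := coe_toNNReal _ (by positivity)
  have hgibbs : cwMeasure n θ = Measure.count.tilted fun x =>
      (b * mag n x) ^ 2 / (2 * (b ^ 2 * θ)⁻¹.toNNReal) := by
    rw [cwMeasure_eq_tilted, hvar, ← hn]
    congr 1 with x
    field_simp
  have hcgf (u : ℝ) : cgf (fun x => b * mag n x) Measure.count (u / (b ^ 2 * θ)⁻¹.toNNReal) -
      u ^ 2 / (2 * (b ^ 2 * θ)⁻¹.toNNReal) = hsExponent b θ u + n * log 2 := by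
    have harg : b / b ^ 4 * (u / (b ^ 2 * θ)⁻¹) = θ * u / b := by field_simp
    rw [cgf_const_mul_mag, hvar, ← hn, harg, hsExponent]
    field_simp
    ring
  rw [hgibbs, tilted_sq_map_conv_gaussianReal (measurable_of_finite _).aemeasurable
    (toNNReal_pos.2 (by positivity)).ne' Integrable.of_finite]
  simp only [hcgf, tilted_add_const]

lemma tendsto_charFun_tilted_hsExponent {ι : Type*} {l : Filter ι} [l.IsCountablyGenerated]
    {b θ : ι → ℝ} {h : ℝ} (hb : Tendsto b l atTop)
    (hθ : Tendsto (fun i => b i ^ 2 * (θ i - 1)) l (𝓝 h)) (t : ℝ) :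
    Tendsto (fun i => charFun (volume.tilted (hsExponent (b i) (θ i))) t) l
      (𝓝 (charFun (Hmeasure h) t)) := by
  have hA : ∀ᶠ i in l, |b i ^ 2 * (θ i - 1)| ≤ |h| + 1 :=
    hθ.abs.eventually_le_const (lt_add_one _)
  have hbA : ∀ᶠ i in l, 768 * (|h| + 1 + 1) ≤ b i ^ 2 :=
    ((tendsto_pow_atTop two_ne_zero).comp hb).eventually_ge_atTop _
  rw [Hmeasure_eq_tilted]
  refine tendsto_charFun_tilted (.of_forall fun i => ?_)
    (integrable_exp_sub_sq (192 * (|h| + 1 + 1) ^ 2)) ?_ (integrable_exp_critExponent h)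
    (ae_of_all _ (tendsto_hsExponent hb hθ)) t
  · unfold hsExponent
    fun_prop
  · filter_upwards [hb.eventually_ne_atTop 0, hA, hbA] with i hi hAi hbAi
    exact ae_of_all _ fun u => exp_le_exp.2 (hsExponent_le_sub_sq hi hAi hbAi u)

lemma tendsto_charFun_cwMeasure_map {ι : Type*} {l : Filter ι} [l.IsCountablyGenerated]
    {n : ι → ℕ} {b θ : ι → ℝ} {h : ℝ} (hn : ∀ i, b i ^ 4 = n i) (hb : Tendsto b l atTop)
    (hθ : Tendsto (fun i => b i ^ 2 * (θ i - 1)) l (𝓝 h)) (t : ℝ) :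
    Tendsto (fun i => charFun ((cwMeasure (n i) (θ i)).map fun x => b i * mag (n i) x) t) l
      (𝓝 (charFun (Hmeasure h) t)) := by
  have hb2 : Tendsto (fun i => b i ^ 2) l atTop := (tendsto_pow_atTop two_ne_zero).comp hb
  have hprec : Tendsto (fun i => b i ^ 2 * θ i) l atTop :=
    (hb2.atTop_add hθ).congr fun i => by ring
  have hvar : Tendsto (fun i => (b i ^ 2 * θ i)⁻¹.toNNReal) l (𝓝 0) := by
    simpa using tendsto_real_toNNReal hprec.inv_tendsto_atTop
  refine tendsto_charFun_of_tendsto_charFun_conv_gaussianReal hvar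
    ((tendsto_charFun_tilted_hsExponent hb hθ t).congr' ?_)
  filter_upwards [hb.eventually_gt_atTop 0, hprec.eventually_gt_atTop 0] with i hi hprec_i
  rw [cwMeasure_map_conv_gaussianReal hi (hn i) (pos_of_mul_pos_right hprec_i (sq_nonneg _))]

lemma natCast_rpow_quarter_pow (n k : ℕ) :
    ((n : ℝ) ^ ((1 : ℝ) / 4)) ^ k = (n : ℝ) ^ ((k : ℝ) / 4) := by
  rw [← rpow_mul_natCast n.cast_nonneg, one_div_mul_eq_div]

lemma natCast_rpow_quarter_pow_two (n : ℕ) : ((n : ℝ) ^ ((1 : ℝ) / 4)) ^ 2 = √n := by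
  rw [natCast_rpow_quarter_pow, sqrt_eq_rpow]
  norm_num

lemma natCast_rpow_quarter_pow_four (n : ℕ) : ((n : ℝ) ^ ((1 : ℝ) / 4)) ^ 4 = n := by
  rw [natCast_rpow_quarter_pow]
  norm_num

end CurieWeiss

theorem stmt14_general {θ : ℕ → ℝ} {h : ℝ}
    (hθ : Tendsto (fun n : ℕ => Real.sqrt n * (θ n - 1)) atTop (nhds h))
    (f : BoundedContinuousFunction ℝ ℝ) :
    Tendsto (fun n : ℕ => ∫ x, f ((n : ℝ) ^ ((1 : ℝ) / 4) * mag n x) ∂cwMeasure n (θ n))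
      atTop (nhds (∫ u, f u ∂Hmeasure h)) := by
  have hmag (n : ℕ) :
      AEMeasurable (fun x => (n : ℝ) ^ ((1 : ℝ) / 4) * mag n x) (cwMeasure n (θ n)) :=
    (measurable_of_finite _).aemeasurable
  let law (n : ℕ) : ProbabilityMeasure ℝ :=
    ⟨(cwMeasure n (θ n)).map fun x => (n : ℝ) ^ ((1 : ℝ) / 4) * mag n x,
      Measure.isProbabilityMeasure_map (hmag n)⟩
  have hscale : Tendsto (fun n : ℕ => (n : ℝ) ^ ((1 : ℝ) / 4)) atTop atTop :=
    (tendsto_rpow_atTop (by norm_num)).comp tendsto_natCast_atTop_atTop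
  have hlaw : Tendsto law atTop (nhds ⟨Hmeasure h, inferInstance⟩) :=
    ProbabilityMeasure.tendsto_of_tendsto_charFun <|
      tendsto_charFun_cwMeasure_map natCast_rpow_quarter_pow_four hscale <| by
        simpa only [natCast_rpow_quarter_pow_two] using hθ
  refine (ProbabilityMeasure.tendsto_iff_forall_integral_tendsto.1 hlaw f).congr fun n => ?_
  exact integral_map (hmag n) f.continuous.aestronglyMeasurable

theorem stmt14 (h : ℝ) :
    ∀ f : BoundedContinuousFunction ℝ ℝ,
      Tendsto (fun n : ℕ =>
          ∫ x, f ((n : ℝ) ^ ((1 : ℝ) / 4) * mag n x) ∂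
            cwMeasure n (1 + h / Real.sqrt (n : ℝ)))
        atTop (nhds (∫ u, f u ∂ Hmeasure h)) :=
  stmt14_general <| tendsto_const_nhds.congr' <| (eventually_gt_atTop 0).mono fun n hn => by
    beta_reduce
    rw [add_sub_cancel_left, mul_div_cancel₀ _ (Real.sqrt_pos.2 (Nat.cast_pos.2 hn)).ne']
end

section
/- Let a, b, c be positive integers and C > 0. For each n, let B_n be a symmetric n×n real matrix with max_{i,j} |B_n(i,j)| ≤ C/n, let Z₁,…,Z_n be i.i.d. real random variables with mean 0, variance 1, and with sup_n E|Z₁|^{a+2b+2c} < ∞, and let R₁,…,R_n be i.i.d. standard Gaussian random variables. Then E[ (√n·Z̄)^a (ZᵀB_nZ)^b (ZᵀB_n²Z)^c ] − E[ (√n·R̄)^a (RᵀB_nR)^b (RᵀB_n²R)^c ] → 0 as n → ∞, where Z̄ = (1/n)Σᵢ Zᵢ and R̄ = (1/n)Σᵢ Rᵢ. -/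
open MeasureTheory ProbabilityTheory Filter

noncomputable def qf {n : ℕ} (B : Matrix (Fin n) (Fin n) ℝ) (v : Fin n → ℝ) : ℝ :=
  ∑ i, ∑ j, v i * B i j * v j

/-!
The statistic is a homogeneous form of degree `K = a + 2b + 2c` in the variables, with coefficients
of order `n ^ (-K / 2)`. Expanding, its expectation is a sum over `f : Fin K → Fin n` of a
coefficient times the product over `i` of the moments of order `#f⁻¹{i}`. If `f` takes some value
exactly once, the product vanishes because the laws are centred. If it takes every value zero or two
times, the product is `1` because the variances are `1`. Any other `f` takes fewer than `K / 2`
values. There are only `O(n ^ ((K - 1) / 2))` such maps and the bound on the moments of order `K`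
controls their products, so they contribute `O(n ^ (-1 / 2))`.
-/

section FiberCard

variable {ι κ : Type*} [DecidableEq ι] [Fintype κ]

/-- The number of times `f` takes the value `i`: the exponent of the variable `z i` in the monomial
`∏ k, z (f k)`. -/
def fiberCard (f : κ → ι) (i : ι) : ℕ :=
  (Finset.univ.filter fun k => f k = i).card

lemma fiberCard_le_card (f : κ → ι) (i : ι) : fiberCard f i ≤ Fintype.card κ :=
  Finset.card_filter_le _ _

lemma fiberCard_eq_zero_iff {f : κ → ι} {i : ι} :
    fiberCard f i = 0 ↔ i ∉ Finset.univ.image f := by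
  simp [fiberCard, Finset.filter_eq_empty_iff]

lemma exists_fiberCard_eq_one_or_forall_eq_zero_or_two {f : κ → ι}
    (hf : Fintype.card κ ≤ 2 * (Finset.univ.image f).card) :
    (∃ i, fiberCard f i = 1) ∨ ∀ i, fiberCard f i = 0 ∨ fiberCard f i = 2 := by
  by_contra! ⟨h_ne_one, j, hj_ne_zero, hj_ne_two⟩
  have two_le : ∀ i ∈ Finset.univ.image f, 2 ≤ fiberCard f i := fun i hi => by
    have := mt fiberCard_eq_zero_iff.mp (not_not.mpr hi)
    have := h_ne_one i
    omega
  have hj : j ∈ Finset.univ.image f := not_not.mp (mt fiberCard_eq_zero_iff.mpr hj_ne_zero)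
  have two_mul_card_lt : (Finset.univ.image f).card * 2 < Fintype.card κ := calc
    (Finset.univ.image f).card * 2 = ∑ _i ∈ Finset.univ.image f, 2 := by simp
    _ < ∑ i ∈ Finset.univ.image f, fiberCard f i :=
      Finset.sum_lt_sum two_le ⟨j, hj, lt_of_le_of_ne (two_le j hj) hj_ne_two.symm⟩
    _ = Fintype.card κ := (Finset.card_eq_sum_card_image f Finset.univ).symm
  omega

lemma exists_comp_eq_of_card_image_le [Nonempty ι] {m : ℕ} {f : κ → ι}
    (hf : (Finset.univ.image f).card ≤ m) : ∃ (g : κ → Fin m) (h : Fin m → ι), h ∘ g = f := by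
  obtain ⟨e⟩ : Nonempty (Finset.univ.image f ↪ Fin m) :=
    Function.Embedding.nonempty_of_card_le (by rwa [Fintype.card_coe, Fintype.card_fin])
  refine ⟨fun k => e ⟨f k, Finset.mem_image_of_mem f (Finset.mem_univ k)⟩,
    Function.extend e Subtype.val fun _ => Classical.arbitrary ι, ?_⟩
  funext k
  exact e.injective.extend_apply _ _ _

variable [Fintype ι]

lemma sum_fiberCard (f : κ → ι) : ∑ i, fiberCard f i = Fintype.card κ :=
  (Finset.card_eq_sum_card_fiberwise fun k _ => Finset.mem_univ (f k)).symm

lemma prod_comp_eq_prod_pow_fiberCard {R : Type*} [CommMonoid R] (f : κ → ι) (z : ι → R) :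
    ∏ k, z (f k) = ∏ i, z i ^ fiberCard f i := by
  rw [← Fintype.prod_fiberwise' f z]
  simp [fiberCard, Fintype.card_subtype]

variable (ι κ) in
lemma card_filter_card_image_le [Nonempty ι] [DecidableEq κ] (m : ℕ) :
    (Finset.univ.filter fun f : κ → ι => (Finset.univ.image f).card ≤ m).card
      ≤ m ^ Fintype.card κ * Fintype.card ι ^ m := by
  have hsub : (Finset.univ.filter fun f : κ → ι => (Finset.univ.image f).card ≤ m) ⊆
      Finset.univ.image fun p : (κ → Fin m) × (Fin m → ι) => p.2 ∘ p.1 := fun f hf => by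
    obtain ⟨g, h, rfl⟩ := exists_comp_eq_of_card_image_le (Finset.mem_filter.mp hf).2
    exact Finset.mem_image_of_mem (fun p : (κ → Fin m) × (Fin m → ι) => p.2 ∘ p.1)
      (Finset.mem_univ (g, h))
  refine (Finset.card_le_card hsub).trans (Finset.card_image_le.trans_eq ?_)
  simp

variable (ι) in
lemma card_filter_two_mul_card_image_lt_le [Nonempty ι] (K : ℕ) :
    ((Finset.univ.filter fun f : Fin K → ι => 2 * (Finset.univ.image f).card < K).card : ℝ)
      ≤ K ^ K * √(Fintype.card ι) ^ K / √(Fintype.card ι) := by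
  obtain rfl | hK := K.eq_zero_or_pos
  · simp
  set N := Fintype.card ι
  have hN : 1 ≤ √(N : ℝ) := Real.one_le_sqrt.mpr (mod_cast Fintype.card_pos (α := ι))
  have hcard : (Finset.univ.filter fun f : Fin K → ι => 2 * (Finset.univ.image f).card < K).card
      ≤ K ^ K * N ^ ((K - 1) / 2) := calc
    _ ≤ (Finset.univ.filter fun f : Fin K → ι =>
          (Finset.univ.image f).card ≤ (K - 1) / 2).card :=
      Finset.card_le_card (Finset.monotone_filter_right _ fun f _ hf => by omega)
    _ ≤ ((K - 1) / 2) ^ K * N ^ ((K - 1) / 2) := by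
      simpa using card_filter_card_image_le ι (Fin K) ((K - 1) / 2)
    _ ≤ K ^ K * N ^ ((K - 1) / 2) := by gcongr; omega
  rw [le_div_iff₀ (by positivity)]
  calc _ ≤ (K : ℝ) ^ K * N ^ ((K - 1) / 2) * √N := by gcongr; exact_mod_cast hcard
    _ = K ^ K * √N ^ (2 * ((K - 1) / 2) + 1) := by
      rw [pow_succ, pow_mul, Real.sq_sqrt N.cast_nonneg, mul_assoc]
    _ ≤ K ^ K * √N ^ K := by gcongr; omega

end FiberCard

section BoundedForm

/-- `P` is a homogeneous form of degree `K` with coefficients bounded by `A`. The coefficients form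
a tensor that need not be symmetric, so that the bounds multiply under products of forms. -/
def IsBoundedForm {ι : Type*} [Fintype ι] (K : ℕ) (A : ℝ) (P : (ι → ℝ) → ℝ) : Prop :=
  ∃ w : (Fin K → ι) → ℝ, (∀ f, |w f| ≤ A) ∧ ∀ z, P z = ∑ f, w f * ∏ k, z (f k)

namespace IsBoundedForm

variable {ι : Type*} [Fintype ι] {K K' : ℕ} {A A' : ℝ} {P P' : (ι → ℝ) → ℝ}

lemma nonneg [Nonempty ι] (hP : IsBoundedForm K A P) : 0 ≤ A := by
  obtain ⟨w, hw, -⟩ := hP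
  exact (abs_nonneg _).trans (hw fun _ => Classical.arbitrary ι)

lemma mul (hP : IsBoundedForm K A P) (hP' : IsBoundedForm K' A' P') :
    IsBoundedForm (K + K') (A * A') (fun z => P z * P' z) := by
  obtain ⟨w, hw, hP⟩ := hP
  obtain ⟨w', hw', hP'⟩ := hP'
  refine ⟨fun f => w (f ∘ Fin.castAdd K') * w' (f ∘ Fin.natAdd K), fun f => ?_, fun z => ?_⟩
  · rw [abs_mul]
    exact mul_le_mul (hw _) (hw' _) (abs_nonneg _) ((abs_nonneg _).trans (hw (f ∘ Fin.castAdd K')))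
  · calc P z * P' z
        = ∑ p : (Fin K → ι) × (Fin K' → ι),
            (w p.1 * ∏ k, z (p.1 k)) * (w' p.2 * ∏ k, z (p.2 k)) := by
          rw [hP, hP', Finset.sum_mul_sum, ← Fintype.sum_prod_type']
      _ = ∑ f : Fin (K + K') → ι, w (f ∘ Fin.castAdd K') * w' (f ∘ Fin.natAdd K) *
            ∏ k, z (f k) := by
          rw [← (Fin.appendEquiv K K').symm.sum_comp]
          refine Finset.sum_congr rfl fun f _ => ?_
          rw [Fin.prod_univ_add, mul_mul_mul_comm]
          rfl

lemma pow (hP : IsBoundedForm K A P) (m : ℕ) :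
    IsBoundedForm (K * m) (A ^ m) (fun z => P z ^ m) := by
  induction m with
  | zero => exact ⟨fun _ => 1, by simp, by simp⟩
  | succ m ih =>
    simp only [pow_succ]
    exact ih.mul hP

end IsBoundedForm

lemma isBoundedForm_sum_mul {ι : Type*} [Fintype ι] {A : ℝ} {u : ι → ℝ} (hu : ∀ i, |u i| ≤ A) :
    IsBoundedForm 1 A (fun z => ∑ i, u i * z i) := by
  refine ⟨fun f => u (f 0), fun f => hu _, fun z => ?_⟩
  rw [← (Equiv.funUnique (Fin 1) ι).symm.sum_comp]
  simp

lemma isBoundedForm_sqrt_mul_mean (n : ℕ) :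
    IsBoundedForm 1 (√n)⁻¹ (fun z : Fin n → ℝ => √n * ((∑ i, z i) / n)) := by
  have hform := isBoundedForm_sum_mul (u := fun _ : Fin n => (√(n : ℝ))⁻¹) (A := (√n)⁻¹)
    fun _ => (abs_of_nonneg (by positivity)).le
  convert hform using 2 with z
  rw [← Finset.mul_sum, mul_div_left_comm, Real.sqrt_div_self, mul_comm]

lemma isBoundedForm_qf {n : ℕ} {B : Matrix (Fin n) (Fin n) ℝ} {A : ℝ}
    (hB : ∀ i j, |B i j| ≤ A) : IsBoundedForm 2 A (qf B) := by
  refine ⟨fun f => B (f 0) (f 1), fun f => hB _ _, fun z => ?_⟩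
  rw [qf, ← Fintype.sum_prod_type', ← (finTwoArrowEquiv (Fin n)).symm.sum_comp]
  refine Finset.sum_congr rfl fun p _ => ?_
  simp only [finTwoArrowEquiv_symm_apply, Fin.prod_univ_two, Matrix.cons_val_zero,
    Matrix.cons_val_one]
  ring

lemma abs_matrix_mul_apply_le {l m n : Type*} [Fintype m] {A : Matrix l m ℝ} {B : Matrix m n ℝ}
    {s t : ℝ} (hA : ∀ i j, |A i j| ≤ s) (hB : ∀ i j, |B i j| ≤ t) (i : l) (j : n) :
    |(A * B) i j| ≤ Fintype.card m * (s * t) := calc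
  |(A * B) i j| ≤ ∑ k, |A i k * B k j| := Finset.abs_sum_le_sum_abs _ _
  _ ≤ ∑ _k : m, s * t := Finset.sum_le_sum fun k _ => by
    rw [abs_mul]
    exact mul_le_mul (hA _ _) (hB _ _) (abs_nonneg _) ((abs_nonneg _).trans (hA i k))
  _ = Fintype.card m * (s * t) := by simp

lemma isBoundedForm_mean_pow_mul_qf_pow_mul_qf_sq_pow (a b c : ℕ) {n : ℕ} {C : ℝ}
    {B : Matrix (Fin n) (Fin n) ℝ} (hB : ∀ i j, |B i j| ≤ C / n) :
    IsBoundedForm (a + 2 * b + 2 * c) (C ^ (b + 2 * c) * (√n)⁻¹ ^ (a + 2 * b + 2 * c))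
      (fun z => (√n * ((∑ i, z i) / n)) ^ a * qf B z ^ b * qf (B * B) z ^ c) := by
  have hBB : ∀ i j, |(B * B) i j| ≤ n * (C / n * (C / n)) := by
    simpa using abs_matrix_mul_apply_le hB hB
  have hinv : (n : ℝ)⁻¹ = (√n)⁻¹ ^ 2 := by rw [inv_pow, Real.sq_sqrt n.cast_nonneg]
  have hBB_bound : n * (C / n * (C / n)) = C ^ 2 * (n : ℝ)⁻¹ := by
    obtain rfl | hn := n.eq_zero_or_pos
    · simp
    · field_simp
  have hform := (((isBoundedForm_sqrt_mul_mean n).pow a).mul ((isBoundedForm_qf hB).pow b)).mul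
    ((isBoundedForm_qf hBB).pow c)
  rw [one_mul, hBB_bound, div_eq_mul_inv, hinv] at hform
  convert hform using 1
  ring

end BoundedForm

section Moments

/-- The law `μ` has mean `0`, variance `1` and `K`-th absolute moment at most `M`. Integrability is
part of the notion because the Bochner integral of a non-integrable function is `0`. -/
structure IsStandardizedLaw (K : ℕ) (M : ℝ) (μ : Measure ℝ) : Prop where
  integral_id : ∫ x, x ∂μ = 0
  integral_sq : ∫ x, x ^ 2 ∂μ = 1
  integrable_abs_pow : Integrable (fun x => |x| ^ K) μ
  integral_abs_pow_le : ∫ x, |x| ^ K ∂μ ≤ M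

namespace IsStandardizedLaw

variable {K : ℕ} {M : ℝ} {μ : Measure ℝ}

lemma nonneg (hμ : IsStandardizedLaw K M μ) : 0 ≤ M :=
  (integral_nonneg fun x => by positivity).trans hμ.integral_abs_pow_le

lemma integrable_pow [IsFiniteMeasure μ] (hμ : IsStandardizedLaw K M μ) {j : ℕ} (hj : j ≤ K) :
    Integrable (fun x => x ^ j) μ := by
  have := integrable_norm_pow_of_le aestronglyMeasurable_id hj hμ.integrable_abs_pow
  exact this.mono' (by fun_prop) (ae_of_all _ fun x => (norm_pow x j).le)

lemma abs_integral_pow_le [IsProbabilityMeasure μ] (hμ : IsStandardizedLaw K M μ) {j : ℕ}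
    (hj : j ≤ K) : |∫ x, x ^ j ∂μ| ≤ (1 + M) ^ j := by
  obtain rfl | hj_pos := j.eq_zero_or_pos
  · simp
  have abs_pow_le : ∀ x : ℝ, |x ^ j| ≤ 1 + |x| ^ K := fun x => by
    rw [abs_pow]
    rcases le_total |x| 1 with hx | hx
    · exact (pow_le_one₀ (abs_nonneg x) hx).trans (le_add_of_nonneg_right (by positivity))
    · exact (pow_le_pow_right₀ hx hj).trans (le_add_of_nonneg_left zero_le_one)
  calc |∫ x, x ^ j ∂μ| ≤ ∫ x, |x ^ j| ∂μ := abs_integral_le_integral_abs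
    _ ≤ ∫ x, (1 + |x| ^ K) ∂μ :=
      integral_mono (hμ.integrable_pow hj).abs ((integrable_const 1).add hμ.integrable_abs_pow)
        abs_pow_le
    _ = 1 + ∫ x, |x| ^ K ∂μ := by
      rw [integral_add (integrable_const 1) hμ.integrable_abs_pow]
      simp
    _ ≤ 1 + M := by grw [hμ.integral_abs_pow_le]
    _ ≤ (1 + M) ^ j := le_self_pow₀ (le_add_of_nonneg_right hμ.nonneg) hj_pos.ne'

end IsStandardizedLaw

lemma isStandardizedLaw_gaussianReal (K : ℕ) :
    IsStandardizedLaw K (∫ x, |x| ^ K ∂gaussianReal 0 1) (gaussianReal 0 1) where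
  integral_id := integral_id_gaussianReal
  integral_sq := by
    have hvar := variance_fun_id_gaussianReal (μ := 0) (v := 1)
    rw [variance_eq_integral (by fun_prop), integral_id_gaussianReal] at hvar
    simpa using hvar
  integrable_abs_pow := (memLp_id_gaussianReal (μ := 0) (v := 1) K).integrable_norm_pow'
  integral_abs_pow_le := le_rfl

variable {ι : Type*} [Fintype ι] {K : ℕ} {M M' : ℝ} {μ ν : ι → Measure ℝ}

lemma prod_integral_pow_fiberCard_eq [DecidableEq ι] (hμ : ∀ i, IsStandardizedLaw K M (μ i))
    (hν : ∀ i, IsStandardizedLaw K M' (ν i)) [∀ i, IsProbabilityMeasure (μ i)]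
    [∀ i, IsProbabilityMeasure (ν i)] {f : Fin K → ι} (hf : K ≤ 2 * (Finset.univ.image f).card) :
    ∏ i, ∫ x, x ^ fiberCard f i ∂μ i = ∏ i, ∫ x, x ^ fiberCard f i ∂ν i := by
  obtain ⟨i, hi⟩ | h :=
    exists_fiberCard_eq_one_or_forall_eq_zero_or_two (f := f) (by simpa using hf)
  · rw [Finset.prod_eq_zero (Finset.mem_univ i) (by simp [hi, (hμ i).integral_id]),
      Finset.prod_eq_zero (Finset.mem_univ i) (by simp [hi, (hν i).integral_id])]
  · refine Finset.prod_congr rfl fun i _ => ?_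
    obtain hi | hi := h i
    · simp [hi]
    · rw [hi, (hμ i).integral_sq, (hν i).integral_sq]

variable [∀ i, IsProbabilityMeasure (μ i)] [∀ i, IsProbabilityMeasure (ν i)]

lemma abs_prod_integral_pow_fiberCard_le [DecidableEq ι] (hμ : ∀ i, IsStandardizedLaw K M (μ i))
    (f : Fin K → ι) : |∏ i, ∫ x, x ^ fiberCard f i ∂μ i| ≤ (1 + M) ^ K := calc
  |∏ i, ∫ x, x ^ fiberCard f i ∂μ i| ≤ ∏ i, (1 + M) ^ fiberCard f i := by
    rw [Finset.abs_prod]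
    exact Finset.prod_le_prod (fun _ _ => abs_nonneg _) fun i _ =>
      (hμ i).abs_integral_pow_le (by simpa using fiberCard_le_card f i)
  _ = (1 + M) ^ K := by rw [Finset.prod_pow_eq_pow_sum, sum_fiberCard, Fintype.card_fin]

lemma integral_pi_sum_mul_prod [DecidableEq ι] (hμ : ∀ i, IsStandardizedLaw K M (μ i))
    (w : (Fin K → ι) → ℝ) :
    ∫ z, (∑ f, w f * ∏ k, z (f k)) ∂Measure.pi μ =
      ∑ f, w f * ∏ i, ∫ x, x ^ fiberCard f i ∂μ i := by
  simp_rw [prod_comp_eq_prod_pow_fiberCard]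
  rw [integral_finsetSum]
  · refine Finset.sum_congr rfl fun f _ => ?_
    rw [integral_const_mul, integral_fintype_prod_eq_prod fun i (x : ℝ) => x ^ fiberCard f i]
  · refine fun f _ => Integrable.const_mul ?_ _
    exact Integrable.fintype_prod (f := fun i (x : ℝ) => x ^ fiberCard f i) fun i =>
      (hμ i).integrable_pow (by simpa using fiberCard_le_card f i)

namespace IsBoundedForm

variable {A : ℝ} {P : (ι → ℝ) → ℝ}

lemma abs_integral_sub_integral_le_card_mul [DecidableEq ι] (hP : IsBoundedForm K A P)
    (hμ : ∀ i, IsStandardizedLaw K M (μ i)) (hν : ∀ i, IsStandardizedLaw K M' (ν i)) :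
    |∫ z, P z ∂Measure.pi μ - ∫ z, P z ∂Measure.pi ν| ≤
      (Finset.univ.filter fun f : Fin K → ι => 2 * (Finset.univ.image f).card < K).card *
        (A * ((1 + M) ^ K + (1 + M') ^ K)) := by
  obtain ⟨w, hw, hP⟩ := hP
  set S := Finset.univ.filter fun f : Fin K → ι => 2 * (Finset.univ.image f).card < K
  have expansion : ∫ z, P z ∂Measure.pi μ - ∫ z, P z ∂Measure.pi ν =
      ∑ f ∈ S, w f * (∏ i, ∫ x, x ^ fiberCard f i ∂μ i - ∏ i, ∫ x, x ^ fiberCard f i ∂ν i) := by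
    simp_rw [hP]
    rw [integral_pi_sum_mul_prod hμ, integral_pi_sum_mul_prod hν, ← Finset.sum_sub_distrib]
    simp_rw [← mul_sub]
    refine (Finset.sum_filter_of_ne fun f _ hf => ?_).symm
    contrapose! hf
    rw [prod_integral_pow_fiberCard_eq hμ hν hf, sub_self, mul_zero]
  have term_le : ∀ f, |w f * (∏ i, ∫ x, x ^ fiberCard f i ∂μ i -
      ∏ i, ∫ x, x ^ fiberCard f i ∂ν i)| ≤ A * ((1 + M) ^ K + (1 + M') ^ K) := fun f => by
    rw [abs_mul]
    refine mul_le_mul (hw f) ((abs_sub _ _).trans ?_) (abs_nonneg _) ((abs_nonneg _).trans (hw f))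
    exact add_le_add (abs_prod_integral_pow_fiberCard_le hμ f)
      (abs_prod_integral_pow_fiberCard_le hν f)
  rw [expansion, ← nsmul_eq_mul]
  exact (Finset.abs_sum_le_sum_abs _ _).trans (Finset.sum_le_card_nsmul _ _ _ fun f _ => term_le f)

lemma abs_integral_sub_integral_le [Nonempty ι] (hP : IsBoundedForm K A P)
    (hμ : ∀ i, IsStandardizedLaw K M (μ i)) (hν : ∀ i, IsStandardizedLaw K M' (ν i)) :
    |∫ z, P z ∂Measure.pi μ - ∫ z, P z ∂Measure.pi ν| ≤
      K ^ K * √(Fintype.card ι) ^ K / √(Fintype.card ι) *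
        (A * ((1 + M) ^ K + (1 + M') ^ K)) := by
  classical
  have hA : 0 ≤ A := hP.nonneg
  have hM : 0 ≤ M := (hμ (Classical.arbitrary ι)).nonneg
  have hM' : 0 ≤ M' := (hν (Classical.arbitrary ι)).nonneg
  grw [hP.abs_integral_sub_integral_le_card_mul hμ hν, card_filter_two_mul_card_image_lt_le]

end IsBoundedForm

end Moments

theorem IsBoundedForm.tendsto_integral_sub_integral {K : ℕ} {D M M' : ℝ}
    {P : (n : ℕ) → (Fin n → ℝ) → ℝ} (hP : ∀ n : ℕ, IsBoundedForm K (D * (√n)⁻¹ ^ K) (P n))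
    {μ ν : (n : ℕ) → Fin n → Measure ℝ} [∀ n i, IsProbabilityMeasure (μ n i)]
    [∀ n i, IsProbabilityMeasure (ν n i)] (hμ : ∀ n i, IsStandardizedLaw K M (μ n i))
    (hν : ∀ n i, IsStandardizedLaw K M' (ν n i)) :
    Tendsto (fun n => ∫ z, P n z ∂Measure.pi (μ n) - ∫ z, P n z ∂Measure.pi (ν n))
      atTop (nhds 0) := by
  set E := K ^ K * D * ((1 + M) ^ K + (1 + M') ^ K)
  have tendsto_bound : Tendsto (fun n : ℕ => E * (√n)⁻¹) atTop (nhds 0) := by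
    simpa using ((Real.tendsto_sqrt_atTop.comp tendsto_natCast_atTop_atTop).inv_tendsto_atTop
      ).const_mul E
  refine squeeze_zero_norm' ?_ tendsto_bound
  filter_upwards [eventually_gt_atTop 0] with n hn
  have : Nonempty (Fin n) := ⟨⟨0, hn⟩⟩
  have hs : √(n : ℝ) ≠ 0 := by positivity
  calc ‖∫ z, P n z ∂Measure.pi (μ n) - ∫ z, P n z ∂Measure.pi (ν n)‖
      ≤ K ^ K * √n ^ K / √n * (D * (√n)⁻¹ ^ K * ((1 + M) ^ K + (1 + M') ^ K)) := by
        simpa using (hP n).abs_integral_sub_integral_le (hμ n) (hν n)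
    _ = E * (√n)⁻¹ := by
        simp only [E, inv_pow]
        field_simp

theorem stmt15_general (a b c : ℕ) (C : ℝ) (B : (n : ℕ) → Matrix (Fin n) (Fin n) ℝ)
    (hB : ∀ n, ∀ i j : Fin n, |B n i j| ≤ C / n)
    (μ ν : (n : ℕ) → Fin n → Measure ℝ) [∀ n i, IsProbabilityMeasure (μ n i)]
    [∀ n i, IsProbabilityMeasure (ν n i)] {M M' : ℝ}
    (hμ : ∀ n i, IsStandardizedLaw (a + 2 * b + 2 * c) M (μ n i))
    (hν : ∀ n i, IsStandardizedLaw (a + 2 * b + 2 * c) M' (ν n i)) :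
    Tendsto (fun n : ℕ =>
        (∫ z : Fin n → ℝ, (√n * ((∑ i, z i) / n)) ^ a * qf (B n) z ^ b *
            qf (B n * B n) z ^ c ∂Measure.pi (μ n)) -
        (∫ z : Fin n → ℝ, (√n * ((∑ i, z i) / n)) ^ a * qf (B n) z ^ b *
            qf (B n * B n) z ^ c ∂Measure.pi (ν n)))
      atTop (nhds 0) :=
  IsBoundedForm.tendsto_integral_sub_integral
    (fun n : ℕ => isBoundedForm_mean_pow_mul_qf_pow_mul_qf_sq_pow a b c (hB n)) hμ hν

theorem stmt15 (a b c : ℕ) (ha : 1 ≤ a) (hb : 1 ≤ b) (hc : 1 ≤ c) (C : ℝ) (hC : 0 < C)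
    (B : (n : ℕ) → Matrix (Fin n) (Fin n) ℝ)
    (hBsym : ∀ n, (B n).IsSymm)
    (hBbound : ∀ n, ∀ i j : Fin n, |B n i j| ≤ C / n)
    (ν : ℕ → Measure ℝ) (hprob : ∀ n, IsProbabilityMeasure (ν n))
    (hmean : ∀ n, ∫ x, x ∂ ν n = 0)
    (hvar : ∀ n, ∫ x, x ^ 2 ∂ ν n = 1)
    (hint : ∀ n, Integrable (fun x => |x| ^ (a + 2 * b + 2 * c)) (ν n))
    (hmom : ∃ M : ℝ, ∀ n, ∫ x, |x| ^ (a + 2 * b + 2 * c) ∂ ν n ≤ M) :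
    Tendsto (fun n : ℕ =>
        (∫ z : Fin n → ℝ,
            (Real.sqrt (n : ℝ) * ((∑ i, z i) / n)) ^ a * qf (B n) z ^ b *
              qf (B n * B n) z ^ c ∂ Measure.pi fun _ : Fin n => ν n) -
        (∫ z : Fin n → ℝ,
            (Real.sqrt (n : ℝ) * ((∑ i, z i) / n)) ^ a * qf (B n) z ^ b *
              qf (B n * B n) z ^ c ∂ Measure.pi fun _ : Fin n => gaussianReal 0 1))
      atTop (nhds 0) :=
  have ⟨_, hM⟩ := hmom
  stmt15_general a b c C B hBbound (fun n _ => ν n) (fun _ _ => gaussianReal 0 1)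
    (fun n _ => ⟨hmean n, hvar n, hint n, hM n⟩) fun _ _ => isStandardizedLaw_gaussianReal _
end
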